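/- Let μ, ν be compositions of n. For each x ∈ D_{μ,ν}, the subspace H_μ T_x H^cl_ν of H_n has basis {X^α C^β T_w : α ∈ ℤ^n, β ∈ {0,1}^n, w ∈ S_μ x S_ν}; moreover H_n decomposes as the direct sum H_n = ⊕_{x ∈ D_{μ,ν}} H_μ T_x H^cl_ν. -/

import Mathlib

/-!
`H_n` acts on the free left module on symbols `T_w`, `w ∈ S_n`, over the Laurent–Clifford algebra
generated by the `X_i^{±1}` and `C_i`: the latter acts by left multiplication, and `T_i` by
`a T_w ↦ (s_i a) T_i T_w + ∂_i(a) T_w`, where `∂_i` is the twisted derivation forced by the mixed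
relations. The vectors on which a quadratic or braid relation holds form a subspace stable under
the generators involved and the Laurent–Clifford algebra, so it suffices to check the relation on
the `T_w` with `w` of minimal length in its coset. As `a T_w ↦ a · T_w ∈ H_n` intertwines this
action with left multiplication, it is inverse to `h ↦ h T_1`, so the `X^α C^β T_w` form a basis
of `H_n`.

In these terms `H_μ T_x H^cl_ν` is the free submodule on the `T_w` with `w ∈ S_μ x S_ν`, and the
decomposition of `H_n` reflects the partition of `S_n` into double cosets.
-/

set_option maxHeartbeats 1000000

namespace HC

/-- Generators of the affine Hecke–Clifford superalgebra `H_n`. -/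
inductive Gen (n : ℕ) : Type
  | X : Fin n → Gen n
  | Xinv : Fin n → Gen n
  | C : Fin n → Gen n
  | T : Fin (n - 1) → Gen n

/-- The node `i` of `Fin n`, for `i : Fin (n-1)` (1-based: the node `i`). -/
def lo {n : ℕ} (i : Fin (n - 1)) : Fin n :=
  ⟨i.val, by have := i.isLt; omega⟩

/-- The node `i+1` of `Fin n`, for `i : Fin (n-1)`. -/
def hi {n : ℕ} (i : Fin (n - 1)) : Fin n :=
  ⟨i.val + 1, by have := i.isLt; omega⟩

variable (F : Type) [Field F]

/-- The free algebra on the generators. -/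
abbrev FA (n : ℕ) : Type := FreeAlgebra F (Gen n)

noncomputable def fx {n : ℕ} (i : Fin n) : FA F n := FreeAlgebra.ι F (Gen.X i)
noncomputable def fxinv {n : ℕ} (i : Fin n) : FA F n := FreeAlgebra.ι F (Gen.Xinv i)
noncomputable def fc {n : ℕ} (i : Fin n) : FA F n := FreeAlgebra.ι F (Gen.C i)
noncomputable def ft {n : ℕ} (i : Fin (n - 1)) : FA F n := FreeAlgebra.ι F (Gen.T i)

/-- The defining relations of the affine Hecke–Clifford superalgebra, with parameter
`q` and `ξ = q - q⁻¹`. -/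
inductive Rel (q : F) (n : ℕ) : FA F n → FA F n → Prop
  | XXinv (i : Fin n) : Rel q n (fx F i * fxinv F i) 1
  | XinvX (i : Fin n) : Rel q n (fxinv F i * fx F i) 1
  | XX (i j : Fin n) : Rel q n (fx F i * fx F j) (fx F j * fx F i)
  | XiXi (i j : Fin n) : Rel q n (fxinv F i * fxinv F j) (fxinv F j * fxinv F i)
  | XXi (i j : Fin n) (h : i ≠ j) : Rel q n (fx F i * fxinv F j) (fxinv F j * fx F i)
  | CC (i : Fin n) : Rel q n (fc F i * fc F i) 1
  | Canti (i j : Fin n) (h : i ≠ j) : Rel q n (fc F i * fc F j) (-(fc F j * fc F i))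
  | CX (i : Fin n) : Rel q n (fc F i * fx F i) (fxinv F i * fc F i)
  | CXi (i : Fin n) : Rel q n (fc F i * fxinv F i) (fx F i * fc F i)
  | CXo (i j : Fin n) (h : i ≠ j) : Rel q n (fc F i * fx F j) (fx F j * fc F i)
  | CXio (i j : Fin n) (h : i ≠ j) : Rel q n (fc F i * fxinv F j) (fxinv F j * fc F i)
  | Tquad (i : Fin (n - 1)) : Rel q n (ft F i * ft F i) ((q - q⁻¹) • ft F i + 1)
  | Tbraid (i j : Fin (n - 1)) (h : (j : ℕ) = (i : ℕ) + 1) :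
      Rel q n (ft F i * ft F j * ft F i) (ft F j * ft F i * ft F j)
  | TTfar (i j : Fin (n - 1)) (h : (i : ℕ) + 1 < (j : ℕ)) :
      Rel q n (ft F i * ft F j) (ft F j * ft F i)
  | TC (i : Fin (n - 1)) : Rel q n (ft F i * fc F (lo i)) (fc F (hi i) * ft F i)
  | TCo (i : Fin (n - 1)) (j : Fin n) (h1 : j ≠ lo i) (h2 : j ≠ hi i) :
      Rel q n (ft F i * fc F j) (fc F j * ft F i)
  | TXo (i : Fin (n - 1)) (j : Fin n) (h1 : j ≠ lo i) (h2 : j ≠ hi i) :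
      Rel q n (ft F i * fx F j) (fx F j * ft F i)
  | TXio (i : Fin (n - 1)) (j : Fin n) (h1 : j ≠ lo i) (h2 : j ≠ hi i) :
      Rel q n (ft F i * fxinv F j) (fxinv F j * ft F i)
  | cross (i : Fin (n - 1)) :
      Rel q n ((ft F i + (q - q⁻¹) • (fc F (lo i) * fc F (hi i))) * fx F (lo i) * ft F i)
        (fx F (hi i))

/-- The affine Hecke–Clifford superalgebra `H_n` over `F` with parameter `q`. -/
abbrev H (q : F) (n : ℕ) : Type := RingQuot (Rel F q n)

noncomputable def X (q : F) {n : ℕ} (i : Fin n) : H F q n :=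
  RingQuot.mkAlgHom F (Rel F q n) (fx F i)

noncomputable def Xinv (q : F) {n : ℕ} (i : Fin n) : H F q n :=
  RingQuot.mkAlgHom F (Rel F q n) (fxinv F i)

noncomputable def C (q : F) {n : ℕ} (i : Fin n) : H F q n :=
  RingQuot.mkAlgHom F (Rel F q n) (fc F i)

noncomputable def T (q : F) {n : ℕ} (i : Fin (n - 1)) : H F q n :=
  RingQuot.mkAlgHom F (Rel F q n) (ft F i)

/-- `q` is either a primitive root of unity of odd order (including `q = 1`)
or not a root of unity at all (and `q ≠ 0`). -/
def GoodParam (q : F) : Prop :=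
  q ≠ 0 ∧ ((∃ m : ℕ, Odd m ∧ IsPrimitiveRoot q m) ∨ ∀ m : ℕ, 0 < m → q ^ m ≠ 1)

/-- `X_i^a` for an integer exponent `a ∈ ℤ`. -/
noncomputable def XZ (q : F) {n : ℕ} (i : Fin n) (a : ℤ) : H F q n :=
  if 0 ≤ a then X F q i ^ a.toNat else Xinv F q i ^ (-a).toNat

/-- The monomial `X^α = X_1^{α_1} ⋯ X_n^{α_n}` for `α ∈ ℤ^n`. -/
noncomputable def Xmon (q : F) {n : ℕ} (α : Fin n → ℤ) : H F q n :=
  ((List.finRange n).map fun i => XZ F q i (α i)).prod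

/-- The monomial `C^β = C_1^{β_1} ⋯ C_n^{β_n}` for `β ∈ {0,1}^n`. -/
noncomputable def Cmon (q : F) {n : ℕ} (β : Fin n → Bool) : H F q n :=
  ((List.finRange n).map fun i => if β i then C F q i else 1).prod

/-- The basic transposition `s_i = (i, i+1)` of `S_n`. -/
def s {n : ℕ} (i : Fin (n - 1)) : Equiv.Perm (Fin n) := Equiv.swap (lo i) (hi i)

/-- The Coxeter length (number of inversions) of a permutation of `Fin n`. -/
def len {n : ℕ} (w : Equiv.Perm (Fin n)) : ℕ :=
  ((Finset.univ : Finset (Fin n × Fin n)).filter fun p => p.1 < p.2 ∧ w p.2 < w p.1).card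

/-- `Tw` is the family of standard basis elements `T_w`, `w ∈ S_n`: it satisfies
`T_1 = 1`, `T_{s_i} = T_i`, and `T_{s_i w} = T_i T_w` whenever `ℓ(s_i w) = ℓ(w) + 1`.
These conditions determine the family uniquely. -/
def IsTFam (q : F) {n : ℕ} (Tw : Equiv.Perm (Fin n) → H F q n) : Prop :=
  Tw 1 = 1 ∧ (∀ i : Fin (n - 1), Tw (s i) = T F q i) ∧
    ∀ (i : Fin (n - 1)) (w : Equiv.Perm (Fin n)),
      len (s i * w) = len w + 1 → Tw (s i * w) = T F q i * Tw w

/-- `h` is the quantum characteristic of `q`:  the smallest positive integer with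
`q^{1-h} + q^{3-h} + ⋯ + q^{h-1} = 0`. -/
def qcharEq (q : F) (h : ℕ) : Prop :=
  0 < h ∧ (∑ k ∈ Finset.range h, q ^ (1 - (h : ℤ) + 2 * (k : ℤ))) = 0 ∧
    ∀ h' : ℕ, 0 < h' → h' < h →
      (∑ k ∈ Finset.range h', q ^ (1 - (h' : ℤ) + 2 * (k : ℤ))) ≠ 0

/-- `i ∈ I = {0, 1, …, ℓ}` where `ℓ = (h-1)/2` (no condition if the quantum
characteristic is infinite). -/
def memI (q : F) (i : ℕ) : Prop := ∀ h : ℕ, qcharEq F q h → 2 * i + 1 ≤ h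

/-- `q(i) = 2(q^{2i+1} + q^{-2i-1})/(q + q⁻¹)`. -/
noncomputable def qres (q : F) (i : ℕ) : F :=
  2 * (q ^ (2 * i + 1) + q⁻¹ ^ (2 * i + 1)) / (q + q⁻¹)

/-- Index of the block containing position `k` (0-based), for a composition given as a
list of parts. -/
def blk : List ℕ → ℕ → ℕ
  | [], _ => 0
  | a :: rest, k => if k < a then 0 else blk rest (k - a) + 1

/-- Membership in the Young subgroup `S_μ ⊆ S_n`. -/
def InYoung {n : ℕ} (μ : List ℕ) (w : Equiv.Perm (Fin n)) : Prop :=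
  ∀ k : Fin n, blk μ (w k).val = blk μ k.val

/-- `μ` is a composition of `n`. -/
def IsComposition (μ : List ℕ) (n : ℕ) : Prop := (∀ a ∈ μ, 0 < a) ∧ μ.sum = n

/-- The parabolic subalgebra generated by all `X_i^{±1}`, `C_i`, and the `T_j` with
`j` in a set `J` of admissible indices. -/
def parabolicJ (q : F) {n : ℕ} (J : Set (Fin (n - 1))) : Subalgebra F (H F q n) :=
  Algebra.adjoin F
    ((Set.range fun i : Fin n => X F q i) ∪ (Set.range fun i : Fin n => Xinv F q i) ∪
      (Set.range fun i : Fin n => C F q i) ∪ {h | ∃ j ∈ J, h = T F q j})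

/-- The parabolic subalgebra `H_μ` for a composition `μ`. -/
def parabolicC (q : F) {n : ℕ} (μ : List ℕ) : Subalgebra F (H F q n) :=
  parabolicJ F q {j | InYoung μ (s j)}

/-- The classical parabolic subalgebra `H^cl_μ`, generated by the `T_j` with `s_j ∈ S_μ`. -/
def clparC (q : F) {n : ℕ} (μ : List ℕ) : Subalgebra F (H F q n) :=
  Algebra.adjoin F {h | ∃ j : Fin (n - 1), InYoung μ (s j) ∧ h = T F q j}

/-- The finite Hecke–Clifford subalgebra `H^fn_n`, generated by all `C_i` and `T_j`. -/
def Hfin (q : F) (n : ℕ) : Subalgebra F (H F q n) :=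
  Algebra.adjoin F
    ((Set.range fun i : Fin n => C F q i) ∪ {h | ∃ j : Fin (n - 1), h = T F q j})

/-- `x` is a minimal length `(S_μ, S_ν)`-double coset representative. -/
def IsMinDC {n : ℕ} (μ ν : List ℕ) (x : Equiv.Perm (Fin n)) : Prop :=
  ∀ u v : Equiv.Perm (Fin n), InYoung μ u → InYoung ν v → len x ≤ len (u * x * v)

/-- `w ∈ S_μ x S_ν`. -/
def InDC {n : ℕ} (μ ν : List ℕ) (x w : Equiv.Perm (Fin n)) : Prop :=
  ∃ u v : Equiv.Perm (Fin n), InYoung μ u ∧ InYoung ν v ∧ w = u * x * v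

/-- A covering step in the Bruhat order: multiplication by a reflection increasing length. -/
def BruhatStep {n : ℕ} (v w : Equiv.Perm (Fin n)) : Prop :=
  ∃ a b : Fin n, a ≠ b ∧ w = Equiv.swap a b * v ∧ len v < len w

/-- The Bruhat order on `S_n`. -/
def BruhatLE {n : ℕ} : Equiv.Perm (Fin n) → Equiv.Perm (Fin n) → Prop :=
  Relation.ReflTransGen BruhatStep

/-- The space of `A`-equivariant linear maps between two representations of the
`F`-algebra `A`. -/
def eqvHoms {A : Type} [Ring A] [Algebra F A] {M N : Type}
    [AddCommGroup M] [Module F M] [AddCommGroup N] [Module F N]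
    (ρM : A →ₐ[F] Module.End F M) (ρN : A →ₐ[F] Module.End F N) :
    Submodule F (M →ₗ[F] N) where
  carrier := {f | ∀ (x : A) (m : M), f (ρM x m) = ρN x (f m)}
  add_mem' := by
    intro f g hf hg x m
    simp only [LinearMap.add_apply, hf x m, hg x m, map_add]
  zero_mem' := by
    intro x m
    simp only [LinearMap.zero_apply, map_zero]
  smul_mem' := by
    intro c f hf x m
    simp only [LinearMap.smul_apply, hf x m, map_smul]

/-- `(E, ρE, ι)` is the module induced along the algebra morphism `φ : B →ₐ A` from
the `B`-representation `(M, ρ)`, i.e. `E = A ⊗_B M`, characterized by its universal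
property. -/
def IsInducedAlong {A B : Type} [Ring A] [Ring B] [Algebra F A] [Algebra F B]
    (φ : B →ₐ[F] A) {M : Type} [AddCommGroup M] [Module F M]
    (ρ : B →ₐ[F] Module.End F M) {E : Type} [AddCommGroup E] [Module F E]
    (ρE : A →ₐ[F] Module.End F E) (ι : M →ₗ[F] E) : Prop :=
  (∀ (b : B) (m : M), ι (ρ b m) = ρE (φ b) (ι m)) ∧
    ∀ (P : Type) [AddCommGroup P] [Module F P],
      ∀ (ρP : A →ₐ[F] Module.End F P) (f : M →ₗ[F] P),
        (∀ (b : B) (m : M), f (ρ b m) = ρP (φ b) (f m)) →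
        ∃! g : E →ₗ[F] P,
          (∀ (x : A) (e : E), g (ρE x e) = ρP x (g e)) ∧ ∀ m : M, g (ι m) = f m

/-- `δ` is the grading automorphism of the superalgebra `H_n`
(identity on even generators, `-1` on the odd generators `C_i`). -/
def IsGradingAut (q : F) {n : ℕ} (δ : H F q n →ₐ[F] H F q n) : Prop :=
  (∀ i : Fin n, δ (X F q i) = X F q i) ∧ (∀ i : Fin n, δ (Xinv F q i) = Xinv F q i) ∧
    (∀ i : Fin n, δ (C F q i) = -C F q i) ∧ ∀ i : Fin (n - 1), δ (T F q i) = T F q i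

/-- `τ` is the antiautomorphism of `H_n` with `τ(T_i) = T_i + ξ C_i C_{i+1}`,
`τ(C_j) = C_j`, `τ(X_j) = X_j`. -/
def IsTauAntiAut (q : F) {n : ℕ} (τ : H F q n →ₗ[F] H F q n) : Prop :=
  Function.Bijective τ ∧ (∀ a b : H F q n, τ (a * b) = τ b * τ a) ∧ τ 1 = 1 ∧
    (∀ i : Fin (n - 1),
      τ (T F q i) = T F q i + (q - q⁻¹) • (C F q (lo i) * C F q (hi i))) ∧
    (∀ j : Fin n, τ (C F q j) = C F q j) ∧ (∀ j : Fin n, τ (X F q j) = X F q j) ∧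
    ∀ j : Fin n, τ (Xinv F q j) = Xinv F q j

/-- `ρ'` is the representation of the subalgebra `B` obtained from the
`H_ν`-representation `ρν` by twisting with the isomorphism `φ_{x⁻¹}`
(determined by `X_i ↦ X_{x⁻¹ i}`, `C_i ↦ C_{x⁻¹ i}`, `T_w ↦ T_{x⁻¹ w x}`). -/
def IsTwistedRep (q : F) {n : ℕ} (ν : List ℕ) (x : Equiv.Perm (Fin n))
    (B : Subalgebra F (H F q n)) {M : Type} [AddCommGroup M] [Module F M]
    (ρν : ↥(parabolicC F q (n := n) ν) →ₐ[F] Module.End F M)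
    (ρ' : ↥B →ₐ[F] Module.End F M) : Prop :=
  (∀ (i : Fin n) (a : ↥B) (b : ↥(parabolicC F q (n := n) ν)),
      (a : H F q n) = X F q i → (b : H F q n) = X F q (x⁻¹ i) → ρ' a = ρν b) ∧
  (∀ (i : Fin n) (a : ↥B) (b : ↥(parabolicC F q (n := n) ν)),
      (a : H F q n) = Xinv F q i → (b : H F q n) = Xinv F q (x⁻¹ i) → ρ' a = ρν b) ∧
  (∀ (i : Fin n) (a : ↥B) (b : ↥(parabolicC F q (n := n) ν)),
      (a : H F q n) = C F q i → (b : H F q n) = C F q (x⁻¹ i) → ρ' a = ρν b) ∧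
  ∀ (j j' : Fin (n - 1)) (a : ↥B) (b : ↥(parabolicC F q (n := n) ν)),
      lo j' = x⁻¹ (lo j) → (a : H F q n) = T F q j → (b : H F q n) = T F q j' → ρ' a = ρν b

/-- The element `f = a_d X_1^d + ⋯ + a_1 X_1 + a_0` of `H_n`. -/
noncomputable def felem (q : F) (n d : ℕ) (aa : ℕ → F) : H F q n :=
  if h : 0 < n then ∑ i ∈ Finset.range (d + 1), aa i • X F q (⟨0, h⟩ : Fin n) ^ i else 0

/-- The conditions on the coefficients of `f`: degree `d ≥ 1`, monic, and
`a_i = a_0 a_{d-i}`. -/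
def GoodPoly (d : ℕ) (aa : ℕ → F) : Prop :=
  1 ≤ d ∧ aa d = 1 ∧ (∀ i ≤ d, aa i = aa 0 * aa (d - i)) ∧ ∀ i : ℕ, d < i → aa i = 0

/-- The relation generating the two-sided ideal `I_f` of `H_n`. -/
inductive CycRel (q : F) (n d : ℕ) (aa : ℕ → F) : H F q n → H F q n → Prop
  | rel : CycRel q n d aa (felem F q n d aa) 0

/-- The cyclotomic Hecke–Clifford superalgebra `H_n^f = H_n / I_f`. -/
abbrev Hf (q : F) (n d : ℕ) (aa : ℕ → F) : Type := RingQuot (CycRel F q n d aa)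

/-- The canonical quotient map `H_n → H_n^f`. -/
noncomputable def cyc (q : F) (n d : ℕ) (aa : ℕ → F) : H F q n →ₐ[F] Hf F q n d aa :=
  RingQuot.mkAlgHom F (CycRel F q n d aa)

noncomputable def Xf (q : F) (n d : ℕ) (aa : ℕ → F) (i : Fin n) : Hf F q n d aa :=
  cyc F q n d aa (X F q i)
noncomputable def Xinvf (q : F) (n d : ℕ) (aa : ℕ → F) (i : Fin n) : Hf F q n d aa :=
  cyc F q n d aa (Xinv F q i)
noncomputable def Cf (q : F) (n d : ℕ) (aa : ℕ → F) (i : Fin n) : Hf F q n d aa :=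
  cyc F q n d aa (C F q i)
noncomputable def Tf (q : F) (n d : ℕ) (aa : ℕ → F) (i : Fin (n - 1)) : Hf F q n d aa :=
  cyc F q n d aa (T F q i)

/-- `e` is the canonical embedding `H_k^f → H_N^f` (shifting all indices by `sh`;
for `sh = 0` this is the standard identification of `H_k^f` with a subalgebra of
`H_N^f`). -/
def IsCycEmb (q : F) (k N d : ℕ) (aa : ℕ → F) (sh : ℕ)
    (e : Hf F q k d aa →ₐ[F] Hf F q N d aa) : Prop :=
  (∀ (i : Fin k) (i' : Fin N), (i' : ℕ) = sh + (i : ℕ) →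
      e (Xf F q k d aa i) = Xf F q N d aa i') ∧
  (∀ (i : Fin k) (i' : Fin N), (i' : ℕ) = sh + (i : ℕ) →
      e (Xinvf F q k d aa i) = Xinvf F q N d aa i') ∧
  (∀ (i : Fin k) (i' : Fin N), (i' : ℕ) = sh + (i : ℕ) →
      e (Cf F q k d aa i) = Cf F q N d aa i') ∧
  ∀ (j : Fin (k - 1)) (j' : Fin (N - 1)), (j' : ℕ) = sh + (j : ℕ) →
      e (Tf F q k d aa j) = Tf F q N d aa j'

/-- `δ` is the grading automorphism of the superalgebra `H_n^f`. -/
def IsCycGrading (q : F) (n d : ℕ) (aa : ℕ → F)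
    (δ : Hf F q n d aa →ₐ[F] Hf F q n d aa) : Prop :=
  (∀ i : Fin n, δ (Xf F q n d aa i) = Xf F q n d aa i) ∧
  (∀ i : Fin n, δ (Xinvf F q n d aa i) = Xinvf F q n d aa i) ∧
  (∀ i : Fin n, δ (Cf F q n d aa i) = -Cf F q n d aa i) ∧
  ∀ j : Fin (n - 1), δ (Tf F q n d aa j) = Tf F q n d aa j

/-- The elements `f_1 = f`, `f_{i+1} = (T_i + ξ C_i C_{i+1}) f_i T_i` of `H_n`
(0-based indexing: `fseq k = f_{k+1}`). -/
noncomputable def fseq (q : F) (n d : ℕ) (aa : ℕ → F) : ℕ → H F q n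
  | 0 => felem F q n d aa
  | k + 1 =>
    if h : k < n - 1 then
      (T F q (⟨k, h⟩ : Fin (n - 1)) +
          (q - q⁻¹) • (C F q (lo (⟨k, h⟩ : Fin (n - 1))) *
            C F q (hi (⟨k, h⟩ : Fin (n - 1))))) *
        fseq q n d aa k * T F q (⟨k, h⟩ : Fin (n - 1))
    else 0

/-- `f_Z = f_{z_1} ⋯ f_{z_u}` for `Z = {z_1 < ⋯ < z_u} ⊆ {1,…,n}` (0-based). -/
noncomputable def fZ (q : F) (n d : ℕ) (aa : ℕ → F) (Z : Finset (Fin n)) : H F q n :=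
  ((Z.sort (· ≤ ·)).map fun z => fseq F q n d aa (z : ℕ)).prod

/-- The subspace `H_μ T_x H^cl_ν` of `H_n`. -/
def HTxH (F : Type) [Field F] (q : F) {n : ℕ} (μ ν : List ℕ)
    (Tw : Equiv.Perm (Fin n) → H F q n) (x : Equiv.Perm (Fin n)) :
    Submodule F (H F q n) :=
  Submodule.span F
    {h | ∃ a ∈ parabolicC F q (n := n) μ, ∃ b ∈ clparC F q (n := n) ν, h = a * Tw x * b}

/-- The family `X^α C^β T_w`, for `w` running over the double coset `S_μ x S_ν`. -/
noncomputable def dcFam (F : Type) [Field F] (q : F) {n : ℕ} (μ ν : List ℕ)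
    (Tw : Equiv.Perm (Fin n) → H F q n) (x : Equiv.Perm (Fin n))
    (p : (Fin n → ℤ) × (Fin n → Bool) × {w : Equiv.Perm (Fin n) // InDC μ ν x w}) :
    H F q n :=
  Xmon F q p.1 * Cmon F q p.2.1 * Tw p.2.2.1

section Permutations

open Equiv DoubleCoset

variable {n : ℕ}

lemma lo_lt_hi (i : Fin (n - 1)) : lo i < hi i := by
  simp [lo, hi, Fin.lt_def]

lemma lo_ne_hi (i : Fin (n - 1)) : lo i ≠ hi i := (lo_lt_hi i).ne

lemma s_lo (i : Fin (n - 1)) : s i (lo i) = hi i := swap_apply_left _ _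

lemma s_hi (i : Fin (n - 1)) : s i (hi i) = lo i := swap_apply_right _ _

lemma s_of_ne (i : Fin (n - 1)) {k : Fin n} (hlo : k ≠ lo i) (hhi : k ≠ hi i) : s i k = k :=
  swap_apply_of_ne_of_ne hlo hhi

lemma s_inv (i : Fin (n - 1)) : (s i)⁻¹ = s i := swap_inv _ _

lemma s_mul_s (i : Fin (n - 1)) : s i * s i = 1 := swap_mul_self _ _

lemma s_mul_s_mul (i : Fin (n - 1)) (w : Perm (Fin n)) : s i * (s i * w) = w :=
  swap_mul_self_mul _ _ _

lemma mul_s_mul_s (i : Fin (n - 1)) (w : Perm (Fin n)) : w * s i * s i = w :=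
  mul_swap_mul_self _ _ _

lemma s_lt_s (i : Fin (n - 1)) {a b : Fin n} (hab : a < b) (hne : ¬(a = lo i ∧ b = hi i)) :
    s i a < s i b := by
  simp only [Fin.ext_iff, Fin.lt_def, lo, hi] at hab hne
  simp only [s, swap_apply_def, Fin.ext_iff, lo, hi]
  split_ifs <;> simp only [Fin.lt_def] <;> omega

/-- The inversions of a permutation: `len w` is by definition their number. -/
def inversions (w : Perm (Fin n)) : Finset (Fin n × Fin n) :=
  Finset.univ.filter fun p => p.1 < p.2 ∧ w p.2 < w p.1

lemma mem_inversions {w : Perm (Fin n)} {a b : Fin n} :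
    (a, b) ∈ inversions w ↔ a < b ∧ w b < w a := by
  simp [inversions]

lemma inversions_s_mul_of_lt {i : Fin (n - 1)} {w : Perm (Fin n)}
    (hlt : w⁻¹ (lo i) < w⁻¹ (hi i)) :
    inversions (s i * w) = insert (w⁻¹ (lo i), w⁻¹ (hi i)) (inversions w) := by
  ext ⟨a, b⟩
  simp only [Finset.mem_insert, mem_inversions, Prod.mk.injEq, Perm.mul_apply,
    Perm.eq_inv_iff_eq]
  constructor
  · rintro ⟨hab, hinv⟩
    refine or_iff_not_imp_left.mpr fun hne => ⟨hab, ?_⟩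
    by_contra hle
    have hwab : w a < w b := lt_of_le_of_ne (not_lt.mp hle) (w.injective.ne hab.ne)
    exact (s_lt_s i hwab hne).asymm hinv
  · rintro (⟨ha, hb⟩ | ⟨hab, hinv⟩)
    · refine ⟨by simpa [← ha, ← hb] using hlt, ?_⟩
      rw [ha, hb, s_lo, s_hi]
      exact lo_lt_hi i
    · refine ⟨hab, s_lt_s i hinv fun ⟨hb, ha⟩ => hab.asymm ?_⟩
      simpa [← ha, ← hb] using hlt

lemma len_s_mul_of_lt {i : Fin (n - 1)} {w : Perm (Fin n)} (hlt : w⁻¹ (lo i) < w⁻¹ (hi i)) :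
    len (s i * w) = len w + 1 := by
  have hnot : (w⁻¹ (lo i), w⁻¹ (hi i)) ∉ inversions w := by
    simpa [mem_inversions] using fun _ => (lo_lt_hi i).le
  change (inversions (s i * w)).card = (inversions w).card + 1
  rw [inversions_s_mul_of_lt hlt, Finset.card_insert_of_notMem hnot]

lemma len_s_mul_of_gt {i : Fin (n - 1)} {w : Perm (Fin n)} (hgt : w⁻¹ (hi i) < w⁻¹ (lo i)) :
    len w = len (s i * w) + 1 := by
  have := len_s_mul_of_lt (i := i) (w := s i * w)
    (by simpa [mul_inv_rev, s_inv, s_lo, s_hi] using hgt)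
  rwa [s_mul_s_mul] at this

lemma len_s_mul (i : Fin (n - 1)) (w : Perm (Fin n)) :
    len (s i * w) = len w + 1 ∨ len w = len (s i * w) + 1 :=
  ((w⁻¹).injective.ne (lo_ne_hi i)).lt_or_gt.imp len_s_mul_of_lt len_s_mul_of_gt

lemma len_inv (w : Perm (Fin n)) : len w⁻¹ = len w := by
  refine Finset.card_bij (fun p _ => (w⁻¹ p.2, w⁻¹ p.1)) ?_ ?_ ?_
  · simp +contextual
  · rintro ⟨a, b⟩ _ ⟨c, d⟩ _ h
    simp_all
  · rintro ⟨a, b⟩ h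
    exact ⟨(w b, w a), by simpa using And.symm (by simpa using h), by simp⟩

lemma len_mul_s_of_lt {i : Fin (n - 1)} {w : Perm (Fin n)} (hlt : w (lo i) < w (hi i)) :
    len (w * s i) = len w + 1 := by
  rw [← len_inv, ← len_inv w, mul_inv_rev, s_inv]
  exact len_s_mul_of_lt (by simpa using hlt)

lemma len_mul_s_of_gt {i : Fin (n - 1)} {w : Perm (Fin n)} (hgt : w (hi i) < w (lo i)) :
    len w = len (w * s i) + 1 := by
  rw [← len_inv, ← len_inv (w * s i), mul_inv_rev, s_inv]
  exact len_s_mul_of_gt (by simpa using hgt)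

lemma len_mul_s (i : Fin (n - 1)) (w : Perm (Fin n)) :
    len (w * s i) = len w + 1 ∨ len w = len (w * s i) + 1 :=
  (w.injective.ne (lo_ne_hi i)).lt_or_gt.imp len_mul_s_of_lt len_mul_s_of_gt

lemma lt_of_forall_lo_lt_hi {b : ℕ → ℕ} (hb : Monotone b) {f : Fin n → Fin n}
    (hf : ∀ j : Fin (n - 1), b (lo j) = b (hi j) → f (lo j) < f (hi j)) {k l : Fin n}
    (hkl : k < l) (hbkl : b k = b l) : f k < f l := by
  obtain ⟨l, hl⟩ := l
  induction l with
  | zero => simp [Fin.lt_def] at hkl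
  | succ m ih =>
    have hkm : k.val ≤ m := Nat.lt_succ_iff.mp hkl
    have hm : m < n - 1 := by omega
    have hbm : b m = b (m + 1) := le_antisymm (hb m.le_succ) (hbkl ▸ hb hkm)
    have hstep : f (lo ⟨m, hm⟩) < f (hi ⟨m, hm⟩) := hf _ hbm
    rcases hkm.eq_or_lt with hk | hlt
    · obtain rfl : k = lo ⟨m, hm⟩ := Fin.ext hk
      exact hstep
    · exact (ih (by omega) hlt (hbkl.trans hbm.symm)).trans hstep

lemma exists_apply_hi_lt_apply_lo {w : Perm (Fin n)} (hw : w ≠ 1) :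
    ∃ i : Fin (n - 1), w (hi i) < w (lo i) := by
  by_contra! hle
  have hmono : StrictMono w := fun k l hkl =>
    lt_of_forall_lo_lt_hi (b := fun _ => 0) monotone_const
      (fun j _ => lt_of_le_of_ne (hle j) (w.injective.ne (lo_ne_hi j))) hkl rfl
  have hid : hmono.orderIsoOfSurjective w w.surjective = OrderIso.refl _ :=
    Subsingleton.elim _ _
  exact hw (Perm.ext fun k => congrArg (fun e : Fin n ≃o Fin n => e k) hid)

lemma exists_len_eq_len_s_mul_add_one {w : Perm (Fin n)} (hw : w ≠ 1) :
    ∃ i : Fin (n - 1), len w = len (s i * w) + 1 :=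
  (exists_apply_hi_lt_apply_lo (inv_ne_one.mpr hw)).imp fun _ => len_s_mul_of_gt

lemma blk_mono (μ : List ℕ) : Monotone (blk μ) := by
  induction μ with
  | nil => exact monotone_const
  | cons c r ih =>
    intro a b hab
    simp only [blk]
    split_ifs
    · exact le_rfl
    · exact Nat.zero_le _
    · omega
    · exact Nat.succ_le_succ (ih (by omega))

lemma monotone_toLex_blk {α : Type*} [Preorder α] (μ : List ℕ) {f : Fin n → α}
    (hf : ∀ k l : Fin n, k < l → blk μ k = blk μ l → f k ≤ f l) :
    Monotone fun k : Fin n => toLex (blk μ k, f k) := by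
  intro k l hkl
  rcases hkl.eq_or_lt with rfl | hlt
  · exact le_rfl
  rw [Prod.Lex.toLex_le_toLex]
  exact (blk_mono μ hkl).lt_or_eq.imp_right fun hblk => ⟨hblk, hf k l hlt hblk⟩

/-- The Young subgroup `S_μ` as a subgroup of `S_n`. -/
def young (n : ℕ) (μ : List ℕ) : Subgroup (Perm (Fin n)) where
  carrier := {w | InYoung μ w}
  one_mem' _ := rfl
  mul_mem' hu hv k := (hu _).trans (hv k)
  inv_mem' {u} hu k := by simpa using (hu (u⁻¹ k)).symm

lemma s_mem_young {μ : List ℕ} {j : Fin (n - 1)} (hj : blk μ (lo j) = blk μ (hi j)) :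
    s j ∈ young n μ := by
  intro k
  by_cases hlo : k = lo j
  · rw [hlo, s_lo, hj]
  by_cases hhi : k = hi j
  · rw [hhi, s_hi, hj]
  rw [s_of_ne j hlo hhi]

lemma exists_s_mem_young_of_ne_one {μ : List ℕ} {u : Perm (Fin n)} (hu : u ∈ young n μ)
    (hne : u ≠ 1) : ∃ j, s j ∈ young n μ ∧ len u = len (u * s j) + 1 := by
  obtain ⟨j, hj⟩ := exists_apply_hi_lt_apply_lo hne
  refine ⟨j, s_mem_young (le_antisymm (blk_mono μ (lo_lt_hi j).le) ?_), len_mul_s_of_gt hj⟩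
  rw [← hu (hi j), ← hu (lo j)]
  exact blk_mono μ hj.le

lemma young_eq_closure (μ : List ℕ) :
    young n μ = Subgroup.closure (s '' {j | InYoung μ (s j)}) := by
  refine le_antisymm (fun u hu => ?_) ((Subgroup.closure_le _).mpr (Set.image_subset_iff.mpr
    fun _ hj => hj))
  induction hlen : len u using Nat.strong_induction_on generalizing u with
  | _ m ih =>
    rcases eq_or_ne u 1 with rfl | hne
    · exact one_mem _
    obtain ⟨j, hj, hdesc⟩ := exists_s_mem_young_of_ne_one hu hne
    rw [← mul_s_mul_s j u]
    exact mul_mem (ih _ (by omega) _ (mul_mem hu hj) rfl)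
      (Subgroup.subset_closure (Set.mem_image_of_mem s hj))

lemma inDC_iff_mem_doubleCoset {μ ν : List ℕ} {x w : Perm (Fin n)} :
    InDC μ ν x w ↔ w ∈ doubleCoset x (young n μ) (young n ν) := by
  rw [mem_doubleCoset]
  exact ⟨fun ⟨u, v, hu, hv, hw⟩ => ⟨u, hu, v, hv, hw⟩, fun ⟨u, hu, v, hv, hw⟩ => ⟨u, v, hu, hv, hw⟩⟩

lemma s_mul_mem_doubleCoset {μ : List ℕ} {K : Subgroup (Perm (Fin n))} {x w : Perm (Fin n)}
    {j : Fin (n - 1)} (hj : InYoung μ (s j)) (hw : w ∈ doubleCoset x (young n μ) K) :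
    s j * w ∈ doubleCoset x (young n μ) K := by
  obtain ⟨u, hu, v, hv, rfl⟩ := mem_doubleCoset.mp hw
  exact mem_doubleCoset.mpr ⟨s j * u, mul_mem hj hu, v, hv, by group⟩

lemma mul_s_mem_doubleCoset {ν : List ℕ} {K : Subgroup (Perm (Fin n))} {x w : Perm (Fin n)}
    {j : Fin (n - 1)} (hj : InYoung ν (s j)) (hw : w ∈ doubleCoset x K (young n ν)) :
    w * s j ∈ doubleCoset x K (young n ν) := by
  obtain ⟨u, hu, v, hv, rfl⟩ := mem_doubleCoset.mp hw
  exact mem_doubleCoset.mpr ⟨u, hu, v * s j, mul_mem hv hj, by group⟩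

lemma doubleCoset_young_induction {μ ν : List ℕ} {x : Perm (Fin n)} {P : Perm (Fin n) → Prop}
    (rep : P x) (left : ∀ j w, InYoung μ (s j) → P w → P (s j * w))
    (right : ∀ j w, InYoung ν (s j) → P w → P (w * s j)) {w : Perm (Fin n)}
    (hw : w ∈ doubleCoset x (young n μ) (young n ν)) : P w := by
  rw [mem_doubleCoset] at hw
  obtain ⟨u, hu, v, hv, rfl⟩ := hw
  rw [SetLike.mem_coe, young_eq_closure] at hu hv
  have hux : P (u * x) := by
    induction hu using Subgroup.closure_induction_left with
    | one => simpa using rep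
    | mul_left _ hs _ _ ih =>
      obtain ⟨j, hj, rfl⟩ := hs
      simpa only [mul_assoc] using left j _ hj ih
    | inv_mul_cancel _ hs _ _ ih =>
      obtain ⟨j, hj, rfl⟩ := hs
      simpa only [mul_assoc, s_inv] using left j _ hj ih
  induction hv using Subgroup.closure_induction_right with
  | one => simpa using hux
  | mul_right _ _ _ hs ih =>
    obtain ⟨j, hj, rfl⟩ := hs
    simpa only [mul_assoc] using right j _ hj ih
  | mul_inv_cancel _ _ _ hs ih =>
    obtain ⟨j, hj, rfl⟩ := hs
    simpa only [mul_assoc, s_inv] using right j _ hj ih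

lemma IsMinDC.apply_lt_apply {μ ν : List ℕ} {x : Perm (Fin n)} (hx : IsMinDC μ ν x)
    {k l : Fin n} (hkl : k < l) (hblk : blk ν k = blk ν l) : x k < x l := by
  refine lt_of_forall_lo_lt_hi (blk_mono ν) (fun j hj => ?_) hkl hblk
  by_contra hle
  have hgt : x (hi j) < x (lo j) :=
    lt_of_le_of_ne (not_lt.mp hle) (x.injective.ne (lo_ne_hi j).symm)
  have hdesc := len_mul_s_of_gt hgt
  have hmin := hx 1 (s j) (one_mem (young n μ)) (s_mem_young hj)
  rw [one_mul] at hmin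
  omega

lemma IsMinDC.inv {μ ν : List ℕ} {x : Perm (Fin n)} (hx : IsMinDC μ ν x) :
    IsMinDC ν μ x⁻¹ := by
  intro u v hu hv
  rw [len_inv, ← len_inv (u * x⁻¹ * v)]
  simpa [mul_inv_rev, mul_assoc] using
    hx v⁻¹ u⁻¹ ((young n μ).inv_mem hv) ((young n ν).inv_mem hu)

lemma IsMinDC.blk_apply_eq {μ ν : List ℕ} {x y : Perm (Fin n)} (hx : IsMinDC μ ν x)
    (hy : IsMinDC μ ν y) (hxy : InDC μ ν x y) (k : Fin n) : blk μ (y k) = blk μ (x k) := by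
  obtain ⟨u, v, hu, hv, hyx⟩ := hxy
  have mono {z : Perm (Fin n)} (hz : IsMinDC μ ν z) :
      Monotone fun k : Fin n => toLex (blk ν k, blk μ (z k)) :=
    monotone_toLex_blk ν fun _ _ hkl hblk => blk_mono μ (hz.apply_lt_apply hkl hblk).le
  have hcomp : (fun k : Fin n => toLex (blk ν k, blk μ (y k))) =
      (fun k : Fin n => toLex (blk ν k, blk μ (x k))) ∘ v := by
    funext k
    simp only [Function.comp, hv k, hyx, Perm.mul_apply, hu (x (v k))]
  have hsort := Tuple.unique_monotone (f := fun k : Fin n => toLex (blk ν k, blk μ (x k)))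
    (σ := v) (τ := 1) (hcomp ▸ mono hy) (mono hx)
  exact congrArg Prod.snd (toLex.injective (congrFun (hcomp.trans hsort) k))

/- Both `x⁻¹` and `y⁻¹` sort the positions `k` by `blk μ k` and then increasingly inside each
block, and they take the same values up to the permutation `x * y⁻¹`, which preserves blocks. -/
lemma IsMinDC.eq_of_inDC {μ ν : List ℕ} {x y : Perm (Fin n)} (hx : IsMinDC μ ν x)
    (hy : IsMinDC μ ν y) (hxy : InDC μ ν x y) : x = y := by
  have mono {z : Perm (Fin n)} (hz : IsMinDC μ ν z) :
      Monotone fun k : Fin n => toLex (blk μ k, z⁻¹ k) :=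
    monotone_toLex_blk μ fun _ _ hkl hblk => (hz.inv.apply_lt_apply hkl hblk).le
  have hcomp : (fun k : Fin n => toLex (blk μ k, y⁻¹ k)) =
      (fun k : Fin n => toLex (blk μ k, x⁻¹ k)) ∘ (x * y⁻¹ : Perm (Fin n)) := by
    funext k
    simp [← hx.blk_apply_eq hy hxy]
  have hsort := Tuple.unique_monotone (f := fun k : Fin n => toLex (blk μ k, x⁻¹ k))
    (σ := x * y⁻¹) (τ := 1) (hcomp ▸ mono hy) (mono hx)
  refine inv_injective (Perm.ext fun k => ?_)
  exact (congrArg Prod.snd (toLex.injective (congrFun (hcomp.trans hsort) k))).symm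

lemma exists_isMinDC_mem_doubleCoset (μ ν : List ℕ) (w : Perm (Fin n)) :
    ∃ x, IsMinDC μ ν x ∧ w ∈ doubleCoset x (young n μ) (young n ν) := by
  obtain ⟨x, hxw, hmin⟩ := (measure (len (n := n))).wf.has_min
    (doubleCoset w (young n μ) (young n ν)) ⟨w, mem_doubleCoset_self _ _ w⟩
  have heq := doubleCoset_eq_of_mem hxw
  refine ⟨x, fun u v hu hv => not_lt.mp (hmin _ ?_), heq ▸ mem_doubleCoset_self _ _ w⟩
  exact heq ▸ mem_doubleCoset.mpr ⟨u, hu, v, hv, rfl⟩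

lemma IsMinDC.disjoint_doubleCoset {μ ν : List ℕ} {x y : Perm (Fin n)} (hx : IsMinDC μ ν x)
    (hy : IsMinDC μ ν y) (hne : x ≠ y) :
    Disjoint (doubleCoset x (young n μ) (young n ν) : Set (Perm (Fin n)))
      (doubleCoset y (young n μ) (young n ν)) := by
  by_contra hdisj
  refine hne (hx.eq_of_inDC hy (inDC_iff_mem_doubleCoset.mpr ?_))
  rw [eq_of_not_disjoint hdisj]
  exact mem_doubleCoset_self _ _ y

end Permutations

section LaurentClifford

open Equiv

lemma mul_eq_of_mul_eq {R : Type*} [Semigroup R] {a b r : R} (h : a * b = r) (z : R) :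
    a * (b * z) = r * z := by rw [← mul_assoc, h]

/-- Families satisfying the relations among the `X_i` and the `C_i` in `H_n`. The inverse of
`gx i` is not part of the data, because those relations force it to be `gc i * gx i * gc i`. -/
structure IsLaurentClifford {n : ℕ} {B : Type*} [Ring B] (gx gc : Fin n → B) : Prop where
  x_comm (i j : Fin n) : gx i * gx j = gx j * gx i
  c_mul_c (i : Fin n) : gc i * gc i = 1
  c_anti {i j : Fin n} (hij : i ≠ j) : gc i * gc j = -(gc j * gc i)
  c_mul_x {i j : Fin n} (hij : i ≠ j) : gc i * gx j = gx j * gc i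
  xc_mul_xc (i : Fin n) : gx i * gc i * (gx i * gc i) = 1

lemma IsLaurentClifford.comp {n : ℕ} {B : Type*} [Ring B] {gx gc : Fin n → B}
    (hg : IsLaurentClifford gx gc) {σ : Fin n → Fin n} (hσ : Function.Injective σ) :
    IsLaurentClifford (gx ∘ σ) (gc ∘ σ) where
  x_comm _ _ := hg.x_comm _ _
  c_mul_c _ := hg.c_mul_c _
  c_anti hij := hg.c_anti (hσ.ne hij)
  c_mul_x hij := hg.c_mul_x (hσ.ne hij)
  xc_mul_xc _ := hg.xc_mul_xc _

/-- Generators of the Laurent–Clifford algebra. -/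
inductive LCGen (n : ℕ) : Type
  | x : Fin n → LCGen n
  | c : Fin n → LCGen n

/-- Defining relations of the Laurent–Clifford algebra, matching `IsLaurentClifford`. -/
inductive LCRel (n : ℕ) : FreeAlgebra F (LCGen n) → FreeAlgebra F (LCGen n) → Prop
  | x_comm (i j : Fin n) : LCRel n (FreeAlgebra.ι F (.x i) * FreeAlgebra.ι F (.x j))
      (FreeAlgebra.ι F (.x j) * FreeAlgebra.ι F (.x i))
  | c_mul_c (i : Fin n) : LCRel n (FreeAlgebra.ι F (.c i) * FreeAlgebra.ι F (.c i)) 1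
  | c_anti (i j : Fin n) (hij : i ≠ j) :
      LCRel n (FreeAlgebra.ι F (.c i) * FreeAlgebra.ι F (.c j))
        (-(FreeAlgebra.ι F (.c j) * FreeAlgebra.ι F (.c i)))
  | c_mul_x (i j : Fin n) (hij : i ≠ j) :
      LCRel n (FreeAlgebra.ι F (.c i) * FreeAlgebra.ι F (.x j))
        (FreeAlgebra.ι F (.x j) * FreeAlgebra.ι F (.c i))
  | xc_mul_xc (i : Fin n) : LCRel n (FreeAlgebra.ι F (.x i) * FreeAlgebra.ι F (.c i) *
      (FreeAlgebra.ι F (.x i) * FreeAlgebra.ι F (.c i))) 1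

/-- The Laurent–Clifford algebra: the algebra generated by the `X_i^{±1}` and the `C_i` only,
given by its own presentation. -/
def LC (n : ℕ) : Type := RingQuot (LCRel F n)

noncomputable instance (n : ℕ) : Ring (LC F n) := inferInstanceAs (Ring (RingQuot (LCRel F n)))

noncomputable instance (n : ℕ) : Algebra F (LC F n) :=
  inferInstanceAs (Algebra F (RingQuot (LCRel F n)))

namespace LC

variable {F} {n : ℕ}

/-- The quotient map defining the Laurent–Clifford algebra. -/
noncomputable def mk : FreeAlgebra F (LCGen n) →ₐ[F] LC F n := RingQuot.mkAlgHom F (LCRel F n)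

lemma mk_eq_of_rel {a b : FreeAlgebra F (LCGen n)} (hab : LCRel F n a b) : mk a = mk b :=
  RingQuot.mkAlgHom_rel F hab

/-- The generator of the Laurent–Clifford algebra corresponding to `X_i`. -/
noncomputable def x (i : Fin n) : LC F n := mk (FreeAlgebra.ι F (.x i))

/-- The generator of the Laurent–Clifford algebra corresponding to `C_i`. -/
noncomputable def c (i : Fin n) : LC F n := mk (FreeAlgebra.ι F (.c i))

/-- The inverse of `x i`, corresponding to `X_i^{-1}`. -/
noncomputable def y (i : Fin n) : LC F n := c i * x i * c i

lemma isLaurentClifford : IsLaurentClifford (x : Fin n → LC F n) c where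
  x_comm i j := by simpa only [x, map_mul] using mk_eq_of_rel (.x_comm (F := F) i j)
  c_mul_c i := by simpa only [c, map_mul, map_one] using mk_eq_of_rel (.c_mul_c (F := F) i)
  c_anti hij := by
    simpa only [c, map_mul, map_neg] using mk_eq_of_rel (.c_anti (F := F) _ _ hij)
  c_mul_x hij := by simpa only [x, c, map_mul] using mk_eq_of_rel (.c_mul_x (F := F) _ _ hij)
  xc_mul_xc i := by
    simpa only [x, c, map_mul, map_one] using mk_eq_of_rel (.xc_mul_xc (F := F) i)

/-- The universal property of the Laurent–Clifford algebra. -/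
noncomputable def lift {B : Type*} [Ring B] [Algebra F B] {gx gc : Fin n → B}
    (hg : IsLaurentClifford gx gc) : LC F n →ₐ[F] B :=
  RingQuot.liftAlgHom F ⟨FreeAlgebra.lift F fun
    | .x i => gx i
    | .c i => gc i, by
    rintro _ _ (⟨i, j⟩ | ⟨i⟩ | ⟨i, j, hij⟩ | ⟨i, j, hij⟩ | ⟨i⟩) <;>
      simp only [map_mul, map_neg, map_one, FreeAlgebra.lift_ι_apply]
    · exact hg.x_comm i j
    · exact hg.c_mul_c i
    · exact hg.c_anti hij
    · exact hg.c_mul_x hij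
    · exact hg.xc_mul_xc i⟩

section Lift

variable {B : Type*} [Ring B] [Algebra F B] {gx gc : Fin n → B} (hg : IsLaurentClifford gx gc)

lemma lift_x (i : Fin n) : lift (F := F) hg (x i) = gx i :=
  (RingQuot.liftAlgHom_mkAlgHom_apply _ _ _ _).trans (FreeAlgebra.lift_ι_apply _ _)

lemma lift_c (i : Fin n) : lift (F := F) hg (c i) = gc i :=
  (RingQuot.liftAlgHom_mkAlgHom_apply _ _ _ _).trans (FreeAlgebra.lift_ι_apply _ _)

end Lift

@[elab_as_elim]
lemma induction {P : LC F n → Prop} (algebraMap : ∀ r, P (algebraMap F _ r)) (x : ∀ i, P (x i))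
    (c : ∀ i, P (c i)) (mul : ∀ a b, P a → P b → P (a * b))
    (add : ∀ a b, P a → P b → P (a + b)) (a : LC F n) : P a := by
  obtain ⟨a, rfl⟩ : ∃ b, mk b = a := RingQuot.mkAlgHom_surjective F (LCRel F n) a
  induction a using FreeAlgebra.induction with
  | grade0 r => exact mk.commutes r ▸ algebraMap r
  | grade1 g =>
    cases g with
    | x i => exact x i
    | c i => exact c i
  | mul a b ha hb => exact map_mul mk a b ▸ mul _ _ ha hb
  | add a b ha hb => exact map_add mk a b ▸ add _ _ ha hb

lemma x_comm (i j : Fin n) : (x i * x j : LC F n) = x j * x i := isLaurentClifford.x_comm i j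

lemma c_mul_c (i : Fin n) : (c i * c i : LC F n) = 1 := isLaurentClifford.c_mul_c i

lemma c_anti {i j : Fin n} (hij : i ≠ j) : (c i * c j : LC F n) = -(c j * c i) :=
  isLaurentClifford.c_anti hij

lemma c_mul_x {i j : Fin n} (hij : i ≠ j) : (c i * x j : LC F n) = x j * c i :=
  isLaurentClifford.c_mul_x hij

lemma x_mul_y (i : Fin n) : (x i * y i : LC F n) = 1 := by
  simpa only [y, mul_assoc] using isLaurentClifford.xc_mul_xc (gx := (x : Fin n → LC F n)) i

lemma c_mul_c_mul (i : Fin n) (z : LC F n) : c i * (c i * z) = z := by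
  rw [← mul_assoc, c_mul_c, one_mul]

lemma c_mul_x_self (i : Fin n) : (c i * x i : LC F n) = y i * c i := by
  rw [y, mul_assoc, c_mul_c, mul_one]

lemma c_mul_y_self (i : Fin n) : (c i * y i : LC F n) = x i * c i := by
  rw [y, mul_assoc, c_mul_c_mul]

lemma y_mul_x (i : Fin n) : (y i * x i : LC F n) = 1 := by
  have hconj := congrArg (fun z => c i * z * c i) (x_mul_y (F := F) i)
  simpa only [y, mul_assoc, c_mul_c, c_mul_c_mul, mul_one] using hconj

/-- The invertible element `x i` of the Laurent–Clifford algebra. -/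
noncomputable def xUnit (i : Fin n) : (LC F n)ˣ := ⟨x i, y i, x_mul_y i, y_mul_x i⟩

lemma c_mul_y {i j : Fin n} (hij : i ≠ j) : (c i * y j : LC F n) = y j * c i :=
  (SemiconjBy.units_inv_right (x := xUnit j) (y := xUnit j) (c_mul_x hij)).eq

lemma x_mul_y_comm (i j : Fin n) : (x i * y j : LC F n) = y j * x i :=
  (SemiconjBy.units_inv_right (x := xUnit j) (y := xUnit j) (x_comm i j)).eq

lemma y_comm (i j : Fin n) : (y i * y j : LC F n) = y j * y i :=
  (SemiconjBy.units_inv_right (x := xUnit j) (y := xUnit j) (x_mul_y_comm j i).symm).eq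

lemma c_mul_x_mul {i j : Fin n} (hij : i ≠ j) (z : LC F n) :
    c i * (x j * z) = x j * (c i * z) := by
  rw [mul_eq_of_mul_eq (c_mul_x hij), mul_assoc]

lemma c_mul_y_mul {i j : Fin n} (hij : i ≠ j) (z : LC F n) :
    c i * (y j * z) = y j * (c i * z) := by
  rw [mul_eq_of_mul_eq (c_mul_y hij), mul_assoc]

lemma c_mul_x_self_mul (i : Fin n) (z : LC F n) : c i * (x i * z) = y i * (c i * z) := by
  rw [mul_eq_of_mul_eq (c_mul_x_self i), mul_assoc]

lemma c_mul_y_self_mul (i : Fin n) (z : LC F n) : c i * (y i * z) = x i * (c i * z) := by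
  rw [mul_eq_of_mul_eq (c_mul_y_self i), mul_assoc]

lemma x_mul_y_mul (i : Fin n) (z : LC F n) : x i * (y i * z) = z := by
  rw [mul_eq_of_mul_eq (x_mul_y i), one_mul]

lemma y_mul_x_mul (i : Fin n) (z : LC F n) : y i * (x i * z) = z := by
  rw [mul_eq_of_mul_eq (y_mul_x i), one_mul]

lemma c_anti_mul {i j : Fin n} (hij : i ≠ j) (z : LC F n) :
    c i * (c j * z) = -(c j * (c i * z)) := by
  rw [mul_eq_of_mul_eq (c_anti hij), neg_mul, mul_assoc]

lemma y_comm_mul (i j : Fin n) (z : LC F n) : y i * (y j * z) = y j * (y i * z) := by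
  rw [← mul_assoc, y_comm, mul_assoc]

end LC

end LaurentClifford

section TwistedDerivations

lemma upper_mul_upper {R : Type*} [Ring R] (a b d a' b' d' : R) :
    !![a, b; 0, d] * !![a', b'; 0, d'] = !![a * a', a * b' + b * d'; 0, d * d'] := by
  simp

namespace LC

variable {F} {n : ℕ}

/-- The value on `x k` of the twisted derivation `del i`: it is read off from
`T_i X_k = X_{s_i k} T_i + ξ delX i k`. -/
noncomputable def delX (i : Fin (n - 1)) (k : Fin n) : LC F n :=
  if k = lo i then -(x (hi i) + c (lo i) * c (hi i) * x (lo i))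
  else if k = hi i then x (hi i) - c (lo i) * c (hi i) * x (hi i) else 0

/-- The value on `c k` of the twisted derivation `del i`: it is read off from
`T_i C_k = C_{s_i k} T_i + ξ delC i k`. -/
noncomputable def delC (i : Fin (n - 1)) (k : Fin n) : LC F n :=
  if k = hi i then c (hi i) - c (lo i) else 0

lemma delX_lo (i : Fin (n - 1)) :
    (delX i (lo i) : LC F n) = -(x (hi i) + c (lo i) * c (hi i) * x (lo i)) := if_pos rfl

lemma delX_hi (i : Fin (n - 1)) :
    (delX i (hi i) : LC F n) = x (hi i) - c (lo i) * c (hi i) * x (hi i) := by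
  rw [delX, if_neg (lo_ne_hi i).symm, if_pos rfl]

lemma delX_of_ne {i : Fin (n - 1)} {k : Fin n} (hlo : k ≠ lo i) (hhi : k ≠ hi i) :
    (delX i k : LC F n) = 0 := by
  rw [delX, if_neg hlo, if_neg hhi]

lemma delC_hi (i : Fin (n - 1)) : (delC i (hi i) : LC F n) = c (hi i) - c (lo i) := if_pos rfl

lemma delC_of_ne {i : Fin (n - 1)} {k : Fin n} (hhi : k ≠ hi i) : (delC i k : LC F n) = 0 :=
  if_neg hhi

lemma eq_lo_or_eq_hi_or_ne (i : Fin (n - 1)) (k : Fin n) :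
    k = lo i ∨ k = hi i ∨ (k ≠ lo i ∧ k ≠ hi i) := by
  tauto

lemma commute_x_delX_of_ne {i : Fin (n - 1)} {l : Fin n} (hlo : l ≠ lo i) (hhi : l ≠ hi i)
    (k : Fin n) : Commute (x l : LC F n) (delX i k) := by
  have hcc : Commute (x l : LC F n) (c (lo i) * c (hi i)) :=
    .mul_right (c_mul_x hlo.symm).symm (c_mul_x hhi.symm).symm
  unfold delX
  split_ifs
  · exact .neg_right (.add_right (x_comm _ _) (hcc.mul_right (x_comm _ _)))
  · exact .sub_right (x_comm _ _) (hcc.mul_right (x_comm _ _))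
  · exact Commute.zero_right _

lemma commute_c_delX_of_ne {i : Fin (n - 1)} {l : Fin n} (hlo : l ≠ lo i) (hhi : l ≠ hi i)
    (k : Fin n) : Commute (c l : LC F n) (delX i k) := by
  have hcc : Commute (c l : LC F n) (c (lo i) * c (hi i)) := by
    rw [commute_iff_eq, ← mul_assoc, c_anti hlo, neg_mul, mul_assoc, c_anti hhi, mul_neg, neg_neg,
      mul_assoc]
  unfold delX
  split_ifs
  · exact .neg_right (.add_right (c_mul_x hhi) (hcc.mul_right (c_mul_x hlo)))
  · exact .sub_right (c_mul_x hhi) (hcc.mul_right (c_mul_x hhi))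
  · exact Commute.zero_right _

lemma commute_x_delC_of_ne {i : Fin (n - 1)} {l : Fin n} (hlo : l ≠ lo i) (hhi : l ≠ hi i)
    (k : Fin n) : Commute (x l : LC F n) (delC i k) := by
  unfold delC
  split_ifs
  · exact .sub_right (c_mul_x hhi.symm).symm (c_mul_x hlo.symm).symm
  · exact Commute.zero_right _

lemma c_mul_delC_of_ne {i : Fin (n - 1)} {l : Fin n} (hlo : l ≠ lo i) (hhi : l ≠ hi i)
    (k : Fin n) : (c l * delC i k : LC F n) = -(delC i k * c l) := by
  unfold delC
  split_ifs
  · rw [mul_sub, sub_mul, c_anti hlo, c_anti hhi]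
    abel
  · simp

lemma x_mul_delX_hi (i : Fin (n - 1)) :
    (x (hi i) * delX i (hi i) + delX i (lo i) * x (hi i) : LC F n) =
      x (lo i) * delX i (lo i) + delX i (hi i) * x (lo i) := by
  have hab := lo_ne_hi i
  rw [delX_lo, delX_hi]
  simp only [mul_assoc, c_mul_x_self, ne_eq, hab, hab.symm, not_false_eq_true, c_mul_y_mul,
    mul_sub, x_mul_y_mul, c_mul_x, c_mul_x_self_mul, neg_add_rev, add_mul, neg_mul, mul_add,
    mul_neg, sub_mul, x_comm (hi i) (lo i), y_comm_mul (hi i) (lo i)]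
  abel

lemma x_mul_delX (i : Fin (n - 1)) (k l : Fin n) :
    (x (s i k) * delX i l + delX i k * x l : LC F n) = x (s i l) * delX i k + delX i l * x k := by
  have of_ne {k l : Fin n} (hlo : l ≠ lo i) (hhi : l ≠ hi i) :
      (x (s i k) * delX i l + delX i k * x l : LC F n) =
        x (s i l) * delX i k + delX i l * x k := by
    rw [delX_of_ne hlo hhi, s_of_ne i hlo hhi, (commute_x_delX_of_ne hlo hhi k).eq]
    simp only [mul_zero, zero_mul, zero_add, add_zero]
  rcases eq_lo_or_eq_hi_or_ne i l with rfl | rfl | ⟨hlo, hhi⟩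
  · rcases eq_lo_or_eq_hi_or_ne i k with rfl | rfl | ⟨hlo, hhi⟩
    · rfl
    · rw [s_lo, s_hi]; exact (x_mul_delX_hi i).symm
    · exact (of_ne hlo hhi).symm
  · rcases eq_lo_or_eq_hi_or_ne i k with rfl | rfl | ⟨hlo, hhi⟩
    · rw [s_lo, s_hi]; exact x_mul_delX_hi i
    · rfl
    · exact (of_ne hlo hhi).symm
  · exact of_ne hlo hhi

lemma c_mul_delC_self (i : Fin (n - 1)) (k : Fin n) :
    (c (s i k) * delC i k + delC i k * c k : LC F n) = 0 := by
  rcases eq_or_ne k (hi i) with rfl | hhi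
  · rw [s_hi, delC_hi, mul_sub, sub_mul, c_mul_c, c_mul_c]
    abel
  · simp only [delC_of_ne hhi, mul_zero, zero_mul, add_zero]

lemma c_mul_delC (i : Fin (n - 1)) {k l : Fin n} (hkl : k ≠ l) :
    (c (s i k) * delC i l + delC i k * c l : LC F n) =
      -(c (s i l) * delC i k + delC i l * c k) := by
  have of_ne_hi {k : Fin n} (hk : k ≠ hi i) :
      (c (s i k) * delC i (hi i) + delC i k * c (hi i) : LC F n) =
        -(c (s i (hi i)) * delC i k + delC i (hi i) * c k) := by
    rw [delC_of_ne hk, mul_zero, zero_mul, zero_add, add_zero]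
    rcases eq_or_ne k (lo i) with rfl | hlo
    · rw [s_lo, delC_hi, mul_sub, sub_mul, c_mul_c, c_mul_c]
      abel
    · rw [s_of_ne i hlo hk, c_mul_delC_of_ne hlo hk]
  rcases eq_or_ne l (hi i) with rfl | hl
  · exact of_ne_hi hkl
  rcases eq_or_ne k (hi i) with rfl | hk
  · rw [of_ne_hi hkl.symm, neg_neg]
  · simp only [delC_of_ne hl, delC_of_ne hk, mul_zero, zero_mul, add_zero, neg_zero]

lemma c_mul_delX_lo (i : Fin (n - 1)) :
    (c (lo i) * delX i (lo i) + delC i (hi i) * x (lo i) : LC F n) =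
      x (hi i) * delC i (hi i) + delX i (lo i) * c (hi i) := by
  have hab := lo_ne_hi i
  rw [delX_lo, delC_hi]
  simp only [mul_assoc, ne_eq, hab, hab.symm, not_false_eq_true, c_mul_x, c_mul_x_self_mul,
    neg_add_rev, mul_add, mul_neg, c_mul_y_self_mul, c_mul_c_mul, sub_mul, c_mul_x_self, mul_sub,
    add_mul, neg_mul, c_mul_c, mul_one]
  abel

lemma c_mul_delX_hi (i : Fin (n - 1)) :
    (c (hi i) * delX i (hi i) : LC F n) = delX i (hi i) * c (lo i) := by
  have hba := (lo_ne_hi i).symm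
  rw [delX_hi]
  simp only [mul_assoc, c_mul_x_self, ne_eq, hba.symm, not_false_eq_true, c_mul_y_mul, mul_sub,
    c_mul_y_self_mul, c_anti_mul hba, c_mul_c, mul_one, mul_neg, sub_neg_eq_add, sub_mul,
    c_anti hba, c_mul_c_mul]
  abel

lemma c_mul_delX (i : Fin (n - 1)) {k l : Fin n} (hkl : k ≠ l) :
    (c (s i k) * delX i l + delC i k * x l : LC F n) =
      x (s i l) * delC i k + delX i l * c k := by
  rcases eq_lo_or_eq_hi_or_ne i k with rfl | rfl | ⟨hlo, hhi⟩
  · rcases eq_lo_or_eq_hi_or_ne i l with rfl | rfl | ⟨hlo, hhi⟩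
    · exact absurd rfl hkl
    · rw [s_lo, delC_of_ne (lo_ne_hi i), c_mul_delX_hi, zero_mul, mul_zero, zero_add, add_zero]
    · simp only [delX_of_ne hlo hhi, delC_of_ne (lo_ne_hi i), mul_zero, zero_mul]
  · rcases eq_lo_or_eq_hi_or_ne i l with rfl | rfl | ⟨hlo, hhi⟩
    · rw [s_lo, s_hi, c_mul_delX_lo]
    · exact absurd rfl hkl
    · rw [delX_of_ne hlo hhi, s_of_ne i hlo hhi, (commute_x_delC_of_ne hlo hhi _).eq]
      simp only [mul_zero, zero_mul, zero_add, add_zero]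
  · rw [delC_of_ne hhi, s_of_ne i hlo hhi, (commute_c_delX_of_ne hlo hhi l).eq]
    simp only [mul_zero, zero_mul, zero_add, add_zero]

lemma xc_mul_delXC (i : Fin (n - 1)) (k : Fin n) :
    (x (s i k) * c (s i k) * (x (s i k) * delC i k + delX i k * c k) +
      (x (s i k) * delC i k + delX i k * c k) * (x k * c k) : LC F n) = 0 := by
  have hab := lo_ne_hi i
  rcases eq_lo_or_eq_hi_or_ne i k with rfl | rfl | ⟨hlo, hhi⟩
  · rw [delX_lo, delC_of_ne hab, s_lo]
    simp only [mul_zero, mul_assoc, ne_eq, hab.symm, not_false_eq_true, c_mul_x, c_mul_x_self_mul,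
      neg_add_rev, add_mul, neg_mul, c_anti hab.symm, mul_neg, c_mul_c_mul, neg_neg, zero_add,
      mul_add, c_mul_y_mul, c_mul_c, mul_one, x_mul_y_mul, c_mul_x_mul, y_mul_x_mul,
      add_add_neg_add_cancel, add_neg_cancel]
  · rw [delX_hi, delC_hi, s_hi]
    simp only [mul_sub, mul_assoc, c_mul_x_self, ne_eq, hab, not_false_eq_true, c_mul_y_mul,
      sub_mul, c_mul_c, mul_one, mul_add, c_mul_x_self_mul, x_mul_y_mul, x_mul_y, c_mul_x_mul,
      add_mul, y_mul_x_mul]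
    abel
  · simp only [delX_of_ne hlo hhi, delC_of_ne hhi, mul_zero, zero_mul, add_zero]

/-- The automorphism of the Laurent–Clifford algebra exchanging the indices `lo i` and `hi i`. -/
noncomputable def sig (i : Fin (n - 1)) : LC F n →ₐ[F] LC F n :=
  lift (isLaurentClifford.comp (s i).injective)

lemma sig_x (i : Fin (n - 1)) (k : Fin n) : sig i (x k : LC F n) = x (s i k) := lift_x _ _

lemma sig_c (i : Fin (n - 1)) (k : Fin n) : sig i (c k : LC F n) = c (s i k) := lift_c _ _

/-- The algebra morphism `a ↦ !![sig i a, del i a; 0, a]`; its multiplicativity is the twisted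
Leibniz rule for `del i`. -/
noncomputable def twist (i : Fin (n - 1)) : LC F n →ₐ[F] Matrix (Fin 2) (Fin 2) (LC F n) :=
  lift (gx := fun k => !![x (s i k), delX i k; 0, x k])
    (gc := fun k => !![c (s i k), delC i k; 0, c k])
    { x_comm := fun k l => by
        simp only [upper_mul_upper, x_mul_delX i k l, x_comm (s i k), x_comm k]
      c_mul_c := fun k => by
        simp only [upper_mul_upper, c_mul_delC_self, c_mul_c, Matrix.one_fin_two]
      c_anti := fun {k l} hkl => by
        simp only [upper_mul_upper, c_mul_delC i hkl, c_anti hkl,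
          c_anti ((s i).injective.ne hkl), Matrix.neg_of, Matrix.neg_cons, Matrix.neg_empty,
          neg_zero]
      c_mul_x := fun {k l} hkl => by
        simp only [upper_mul_upper, c_mul_delX i hkl, c_mul_x hkl,
          c_mul_x ((s i).injective.ne hkl)]
      xc_mul_xc := fun k => by
        simp only [upper_mul_upper, xc_mul_delXC, isLaurentClifford.xc_mul_xc,
          Matrix.one_fin_two] }

/-- The `sig i`-twisted derivation of the Laurent–Clifford algebra which describes commuting `T_i`
past an element `a` of it: `T_i a = sig i a T_i + ξ del i a`. -/
noncomputable def del (i : Fin (n - 1)) : LC F n →ₗ[F] LC F n :=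
  Matrix.entryLinearMap F (LC F n) 0 1 ∘ₗ (twist i).toLinearMap

lemma twist_x (i : Fin (n - 1)) (k : Fin n) :
    twist i (x k : LC F n) = !![x (s i k), delX i k; 0, x k] := lift_x _ _

lemma twist_c (i : Fin (n - 1)) (k : Fin n) :
    twist i (c k : LC F n) = !![c (s i k), delC i k; 0, c k] := lift_c _ _

lemma del_x (i : Fin (n - 1)) (k : Fin n) : del i (x k : LC F n) = delX i k :=
  congr_fun₂ (twist_x i k) 0 1

lemma del_c (i : Fin (n - 1)) (k : Fin n) : del i (c k : LC F n) = delC i k :=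
  congr_fun₂ (twist_c i k) 0 1

lemma twist_eq (i : Fin (n - 1)) (a : LC F n) :
    twist i a = !![sig i a, del i a; 0, a] := by
  suffices h : twist i a = !![sig i a, twist i a 0 1; 0, a] from h
  induction a using LC.induction with
  | algebraMap r =>
    ext j k
    fin_cases j <;> fin_cases k <;> simp [Matrix.algebraMap_matrix_apply]
  | x k => simp [twist_x, sig_x]
  | c k => simp [twist_c, sig_c]
  | mul a b ha hb =>
    rw [map_mul, map_mul, ha, hb, upper_mul_upper]
    simp
  | add a b ha hb =>
    rw [map_add, map_add, ha, hb]
    simp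

lemma del_mul (i : Fin (n - 1)) (a b : LC F n) :
    del i (a * b) = sig i a * del i b + del i a * b := by
  have h : twist i (a * b) = twist i a * twist i b := map_mul _ _ _
  simp only [twist_eq, upper_mul_upper] at h
  exact congr_fun₂ h 0 1

lemma del_algebraMap (i : Fin (n - 1)) (r : F) : del i (algebraMap F (LC F n) r) = 0 := by
  have h : twist i (algebraMap F (LC F n) r) = algebraMap F _ r := (twist i).commutes r
  exact (congr_fun₂ h 0 1).trans (Matrix.algebraMap_matrix_apply.trans (if_neg zero_ne_one))

end LC

end TwistedDerivations

section MonomialBasis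

section Cyclic

variable {R A M : Type*} [CommRing R] [Ring A] [Algebra R A] [AddCommGroup M] [Module R M]

/-- The cyclic submodule generated by the vector `e` of a representation `ρ`. -/
def orbit (ρ : A →ₐ[R] Module.End R M) (e : M) : Submodule R M :=
  LinearMap.range (LinearMap.applyₗ e ∘ₗ ρ.toLinearMap)

lemma mem_orbit {ρ : A →ₐ[R] Module.End R M} {e m : M} : m ∈ orbit ρ e ↔ ∃ a, ρ a e = m := Iff.rfl

lemma self_mem_orbit (ρ : A →ₐ[R] Module.End R M) (e : M) : e ∈ orbit ρ e :=
  ⟨1, by simp⟩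

lemma apply_mem_orbit {ρ : A →ₐ[R] Module.End R M} {e m : M} (a : A) (hm : m ∈ orbit ρ e) :
    ρ a m ∈ orbit ρ e := by
  obtain ⟨b, rfl⟩ := hm
  exact ⟨a * b, by simp⟩

lemma bijective_of_orbit_eq_top (ρ : A →ₐ[R] Module.End R M) {e : M} {Φ : M →ₗ[R] A}
    (hΦ : ∀ a m, Φ (ρ a m) = a * Φ m) (he : Φ e = 1) (htop : orbit ρ e = ⊤) :
    Function.Bijective Φ := by
  have apply_orbit (a : A) : Φ (ρ a e) = a := by rw [hΦ, he, mul_one]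
  refine ⟨(injective_iff_map_eq_zero Φ).2 fun m hm => ?_, fun a => ⟨ρ a e, apply_orbit a⟩⟩
  obtain ⟨a, rfl⟩ := mem_orbit.1 (htop ▸ Submodule.mem_top : m ∈ orbit ρ e)
  rw [apply_orbit] at hm
  rw [hm, map_zero, LinearMap.zero_apply]

end Cyclic

lemma mul_prod_map_of_pairwise_lt {ι B : Type*} [LinearOrder ι] [Monoid B] {l : List ι}
    (hl : l.Pairwise (· < ·)) {i : ι} (hi : i ∈ l) {f g : ι → B} {a b : B}
    (hlt : ∀ k < i, a * f k = g k * a) (heq : a * f i = g i * b)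
    (hgt : ∀ k > i, b * f k = g k * b) : a * (l.map f).prod = (l.map g).prod * b := by
  induction l with
  | nil => simp at hi
  | cons k l ih =>
    rw [List.pairwise_cons] at hl
    rw [List.map_cons, List.map_cons, List.prod_cons, List.prod_cons]
    rcases List.mem_cons.1 hi with rfl | hil
    · have hcomm : b * (l.map f).prod = (l.map g).prod * b := by
        clear ih hi
        induction l with
        | nil => simp
        | cons m l ih =>
          rw [List.forall_mem_cons, List.pairwise_cons] at hl
          rw [List.map_cons, List.map_cons, List.prod_cons, List.prod_cons, ← mul_assoc,
            hgt m hl.1.1, mul_assoc, ih ⟨hl.1.2, hl.2.2⟩, mul_assoc]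
      rw [← mul_assoc, heq, mul_assoc, hcomm, mul_assoc]
    · rw [← mul_assoc, hlt k (hl.1 i hil), mul_assoc, ih hl.2 hil, mul_assoc]

lemma prod_map_smul {ι R B : Type*} [CommMonoid R] [Monoid B] [MulAction R B]
    [IsScalarTower R B B] [SMulCommClass R B B] (l : List ι) (r : ι → R) (f : ι → B) :
    (l.map fun k => r k • f k).prod = (l.map r).prod • (l.map f).prod := by
  induction l with
  | nil => simp
  | cons k l ih => simp only [List.map_cons, List.prod_cons, ih, smul_mul_smul_comm]

variable {F} {n : ℕ}

/-- Negation of the exponent of index `i`: the effect on exponents of moving `C_i` past `X^α`. -/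
def negAt (i : Fin n) (α : Fin n → ℤ) : Fin n → ℤ := Function.update α i (-α i)

/-- Change of the exponent of index `i`: the effect on exponents of multiplying `C^β` by `C_i`. -/
def toggle (i : Fin n) (β : Fin n → Bool) : Fin n → Bool := Function.update β i !β i

variable (F) in
/-- The sign in `C_i C^β = sgn i β C^(toggle i β)`. -/
def sgn (i : Fin n) (β : Fin n → Bool) : F := ∏ k, if k < i ∧ β k then -1 else 1

lemma negAt_self (i : Fin n) (α : Fin n → ℤ) : negAt i α i = -α i := Function.update_self ..

lemma negAt_of_ne {i k : Fin n} (hki : k ≠ i) (α : Fin n → ℤ) : negAt i α k = α k :=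
  Function.update_of_ne hki ..

lemma toggle_self (i : Fin n) (β : Fin n → Bool) : toggle i β i = !β i := Function.update_self ..

lemma toggle_of_ne {i k : Fin n} (hki : k ≠ i) (β : Fin n → Bool) : toggle i β k = β k :=
  Function.update_of_ne hki ..

lemma negAt_negAt (i : Fin n) (α : Fin n → ℤ) : negAt i (negAt i α) = α := by
  simp [negAt]

lemma toggle_toggle (i : Fin n) (β : Fin n → Bool) : toggle i (toggle i β) = β := by
  simp [toggle]

lemma negAt_comm {i j : Fin n} (hij : i ≠ j) (α : Fin n → ℤ) :
    negAt i (negAt j α) = negAt j (negAt i α) := by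
  rw [negAt, negAt_of_ne hij, negAt, negAt, negAt_of_ne hij.symm, negAt, Function.update_comm hij]

lemma toggle_comm {i j : Fin n} (hij : i ≠ j) (β : Fin n → Bool) :
    toggle i (toggle j β) = toggle j (toggle i β) := by
  rw [toggle, toggle_of_ne hij, toggle, toggle, toggle_of_ne hij.symm, toggle,
    Function.update_comm hij]

lemma negAt_zero (i : Fin n) : negAt i 0 = 0 := by
  rw [negAt, Pi.zero_apply, neg_zero, Function.update_eq_self_iff, Pi.zero_apply]

lemma negAt_add (i : Fin n) (α α' : Fin n → ℤ) : negAt i (α + α') = negAt i α + negAt i α' := by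
  ext k
  rcases eq_or_ne k i with rfl | hki
  · simp only [negAt_self, Pi.add_apply, neg_add]
  · simp only [negAt_of_ne hki, Pi.add_apply]

lemma negAt_single_self (i : Fin n) (a : ℤ) : negAt i (Pi.single i a) = Pi.single i (-a) := by
  simp [negAt, Pi.single]

lemma negAt_single_of_ne {i j : Fin n} (hij : i ≠ j) (a : ℤ) :
    negAt i (Pi.single j a) = Pi.single j a := by
  rw [negAt, Pi.single_eq_of_ne hij, neg_zero, Function.update_eq_self_iff,
    Pi.single_eq_of_ne hij]

lemma sgn_mul_self (i : Fin n) (β : Fin n → Bool) : sgn F i β * sgn F i β = 1 := by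
  rw [sgn, ← Finset.prod_mul_distrib]
  refine Finset.prod_eq_one fun k _ => ?_
  split_ifs <;> norm_num

lemma sgn_toggle (i j : Fin n) (β : Fin n → Bool) :
    sgn F i (toggle j β) = (if j < i then -1 else 1) * sgn F i β := by
  have hite : (if j < i then -1 else 1 : F) =
      ∏ k, if k = j then (if k < i then -1 else 1) else 1 := by
    rw [Finset.prod_ite_eq', if_pos (Finset.mem_univ j)]
  rw [hite, sgn, sgn, ← Finset.prod_mul_distrib]
  refine Finset.prod_congr rfl fun k _ => ?_
  rcases eq_or_ne k j with rfl | hkj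
  · cases hβ : β k <;> by_cases hki : k < i <;> simp [toggle_self, hβ, hki]
  · rw [toggle_of_ne hkj, if_neg hkj, one_mul]

namespace LC

/-- The monomial in `LC F n` corresponding to `X^α`. -/
noncomputable def xmon (α : Fin n → ℤ) : LC F n :=
  ((List.finRange n).map fun k => ((xUnit k ^ α k : (LC F n)ˣ) : LC F n)).prod

/-- The monomial in `LC F n` corresponding to `C^β`. -/
noncomputable def cmon (β : Fin n → Bool) : LC F n :=
  ((List.finRange n).map fun k => if β k then c k else 1).prod

lemma x_mul_xmon (i : Fin n) (α : Fin n → ℤ) :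
    (x i * xmon α : LC F n) = xmon (α + Pi.single i 1) := by
  rw [← mul_one (xmon (α + _))]
  refine mul_prod_map_of_pairwise_lt (List.pairwise_lt_finRange n) (List.mem_finRange i)
    (fun k hki => ?_) ?_ fun k hik => ?_
  · simpa [Pi.single_eq_of_ne hki.ne] using
      (SemiconjBy.units_zpow_right (x := xUnit k) (y := xUnit k) (x_comm i k) (α k)).eq
  · have hzpow := zpow_add (xUnit (F := F) i) 1 (α i)
    rw [zpow_one, add_comm] at hzpow
    simpa [xUnit] using (congrArg Units.val hzpow).symm
  · simp [Pi.single_eq_of_ne hik.ne']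

lemma c_mul_xmon (i : Fin n) (α : Fin n → ℤ) :
    (c i * xmon α : LC F n) = xmon (negAt i α) * c i := by
  have of_ne {k : Fin n} (hki : k ≠ i) :
      c i * ((xUnit k ^ α k : (LC F n)ˣ) : LC F n) =
        ((xUnit k ^ negAt i α k : (LC F n)ˣ) : LC F n) * c i := by
    rw [negAt_of_ne hki]
    exact (SemiconjBy.units_zpow_right (x := xUnit k) (y := xUnit k) (c_mul_x hki.symm) (α k)).eq
  refine mul_prod_map_of_pairwise_lt (List.pairwise_lt_finRange n) (List.mem_finRange i)
    (fun k hki => of_ne hki.ne) ?_ fun k hik => of_ne hik.ne'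
  rw [negAt_self, ← inv_zpow']
  exact (SemiconjBy.units_zpow_right (x := xUnit i) (y := (xUnit i)⁻¹) (c_mul_x_self i) (α i)).eq

lemma c_mul_cmon (i : Fin n) (β : Fin n → Bool) :
    (c i * cmon β : LC F n) = sgn F i β • cmon (toggle i β) := by
  rw [cmon, cmon, sgn, Fin.prod_univ_def, ← prod_map_smul,
    ← mul_one (List.prod (List.map (fun k => _ • _) _))]
  refine mul_prod_map_of_pairwise_lt (List.pairwise_lt_finRange n) (List.mem_finRange i)
    (fun k hki => ?_) ?_ fun k hik => ?_
  · cases hβ : β k <;> simp [toggle_of_ne hki.ne, hβ, hki, c_anti hki.ne']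
  · cases hβ : β i <;> simp [toggle_self, hβ, c_mul_c]
  · simp [toggle_of_ne hik.ne', hik.le.not_gt]

/-- The free `F`-module on the symbols `X^α C^β`, on which `LC F n` acts by `monRep`. -/
abbrev Mon (F : Type) [Field F] (n : ℕ) : Type := (Fin n → ℤ) × (Fin n → Bool) →₀ F

/-- Left multiplication by `X_i` on the symbols `X^α C^β`. -/
noncomputable def xOp (i : Fin n) : Module.End F (Mon F n) :=
  Finsupp.lmapDomain F F fun p => (p.1 + Pi.single i 1, p.2)

/-- Left multiplication by `C_i` on the symbols `X^α C^β`. -/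
noncomputable def cOp (i : Fin n) : Module.End F (Mon F n) :=
  Finsupp.linearCombination F fun p => .single (negAt i p.1, toggle i p.2) (sgn F i p.2)

lemma xOp_single (i : Fin n) (p : (Fin n → ℤ) × (Fin n → Bool)) (r : F) :
    xOp i (.single p r) = .single (p.1 + Pi.single i 1, p.2) r :=
  Finsupp.mapDomain_single

lemma cOp_single (i : Fin n) (p : (Fin n → ℤ) × (Fin n → Bool)) (r : F) :
    cOp i (.single p r) = .single (negAt i p.1, toggle i p.2) (r * sgn F i p.2) := by
  rw [cOp, Finsupp.linearCombination_single, Finsupp.smul_single, smul_eq_mul]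

lemma isLaurentClifford_xOp_cOp :
    IsLaurentClifford (xOp : Fin n → Module.End F (Mon F n)) cOp where
  x_comm i j := by
    ext p : 2
    simp [xOp_single, add_right_comm]
  c_mul_c i := by
    ext p : 2
    simp [cOp_single, negAt_negAt, toggle_toggle, sgn_toggle, sgn_mul_self]
  c_anti {i j} hij := by
    ext p : 2
    rcases hij.lt_or_gt with hlt | hlt <;>
      simp [cOp_single, negAt_comm hij, toggle_comm hij, sgn_toggle, hlt, hlt.not_gt, mul_comm]
  c_mul_x hij := by
    ext p : 2
    simp [cOp_single, xOp_single, negAt_add, negAt_single_of_ne hij]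
  xc_mul_xc i := by
    ext p : 2
    simp [cOp_single, xOp_single, negAt_add, negAt_negAt, negAt_single_self, toggle_toggle,
      sgn_toggle, sgn_mul_self, add_assoc, ← Pi.single_add]

/-- The action of the Laurent–Clifford algebra on the symbols `X^α C^β`. -/
noncomputable def monRep : LC F n →ₐ[F] Module.End F (Mon F n) := lift isLaurentClifford_xOp_cOp

lemma monRep_x (i : Fin n) : monRep (x i : LC F n) = xOp i := lift_x _ _

lemma monRep_c (i : Fin n) : monRep (c i : LC F n) = cOp i := lift_c _ _

/-- The evaluation of the symbols `X^α C^β` as monomials. -/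
noncomputable def evalMon : Mon F n →ₗ[F] LC F n :=
  Finsupp.linearCombination F fun p => xmon p.1 * cmon p.2

lemma evalMon_single (p : (Fin n → ℤ) × (Fin n → Bool)) (r : F) :
    evalMon (.single p r) = r • (xmon p.1 * cmon p.2 : LC F n) :=
  Finsupp.linearCombination_single ..

lemma evalMon_monRep (a : LC F n) (m : Mon F n) : evalMon (monRep a m) = a * evalMon m := by
  induction a using LC.induction generalizing m with
  | algebraMap r =>
    rw [AlgHom.commutes, Module.algebraMap_end_apply, map_smul, Algebra.smul_def]
  | x i =>
    induction m using Finsupp.induction_linear with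
    | zero => simp
    | add m m' hm hm' => simp only [map_add, hm, hm', mul_add]
    | single p r =>
      rw [monRep_x, xOp_single, evalMon_single, evalMon_single, ← x_mul_xmon, mul_assoc,
        mul_smul_comm]
  | c i =>
    induction m using Finsupp.induction_linear with
    | zero => simp
    | add m m' hm hm' => simp only [map_add, hm, hm', mul_add]
    | single p r =>
      rw [monRep_c, cOp_single, evalMon_single, evalMon_single, mul_smul_comm, ← mul_assoc,
        c_mul_xmon, mul_assoc, c_mul_cmon, mul_smul_comm, smul_smul]
  | mul a b ha hb => rw [map_mul, Module.End.mul_apply, ha, hb, mul_assoc]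
  | add a b ha hb => rw [map_add, LinearMap.add_apply, map_add, ha, hb, add_mul]

lemma monRep_xUnit_zpow (i : Fin n) (k : ℤ) (p : (Fin n → ℤ) × (Fin n → Bool)) :
    monRep ((xUnit i ^ k : (LC F n)ˣ) : LC F n) (.single p 1) =
      .single (p.1 + Pi.single i k, p.2) 1 := by
  have succ (k : ℤ) : monRep (x i : LC F n) (.single (p.1 + Pi.single i k, p.2) 1) =
      .single (p.1 + Pi.single i (k + 1), p.2) 1 := by
    rw [monRep_x, xOp_single, add_assoc, ← Pi.single_add]
  induction k with
  | zero => simp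
  | succ k ih =>
    rw [← succ, ← ih, ← Module.End.mul_apply, ← map_mul, add_comm, zpow_one_add]
    rfl
  | pred k ih =>
    have hsucc := succ (-k - 1)
    rw [sub_add_cancel, ← ih] at hsucc
    rw [sub_eq_neg_add, zpow_add, zpow_neg_one, Units.val_mul, map_mul, Module.End.mul_apply,
      neg_add_eq_sub, ← hsucc, ← Module.End.mul_apply, ← map_mul]
    exact congrArg (fun a => monRep a _) (xUnit i).inv_mul |>.trans (by simp)

variable (F n) in
/-- The symbol `X^0 C^0`. -/
noncomputable def monOne : Mon F n := .single (0, fun _ => false) 1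

lemma single_zero_mem_orbit (S : Finset (Fin n)) (β : Fin n → Bool) (hβ : ∀ k ∉ S, β k = false) :
    .single (0, β) 1 ∈ orbit monRep (monOne F n) := by
  induction S using Finset.induction_on generalizing β with
  | empty =>
    rw [show β = fun _ => false from funext fun k => hβ k (Finset.notMem_empty k)]
    exact self_mem_orbit _ _
  | insert i S _ ih =>
    have of_apply_eq_false {β : Fin n → Bool} (hβ : ∀ k ∉ insert i S, β k = false)
        (hi : β i = false) : .single (0, β) 1 ∈ orbit monRep (monOne F n) := by
      refine ih β fun k hk => ?_
      rcases eq_or_ne k i with rfl | hki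
      · exact hi
      · exact hβ k (by simp only [Finset.mem_insert, hki, hk, or_self, not_false_eq_true])
    cases hi : β i with
    | false => exact of_apply_eq_false hβ hi
    | true =>
      have htoggle : .single (0, toggle i β) 1 ∈ orbit monRep (monOne F n) := by
        refine of_apply_eq_false (fun k hk => ?_) (by rw [toggle_self, hi, Bool.not_true])
        rw [toggle_of_ne (ne_of_mem_of_not_mem (Finset.mem_insert_self i S) hk).symm, hβ k hk]
      have hc := Submodule.smul_mem _ (sgn F i (toggle i β)) (apply_mem_orbit (c i) htoggle)
      rwa [monRep_c, cOp_single, one_mul, Finsupp.smul_single, smul_eq_mul, sgn_mul_self,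
        toggle_toggle, negAt_zero] at hc

lemma orbit_monRep : orbit monRep (monOne F n) = ⊤ := by
  have single_mem (S : Finset (Fin n)) (p : (Fin n → ℤ) × (Fin n → Bool)) :
      .single (∑ i ∈ S, Pi.single i (p.1 i), p.2) 1 ∈ orbit monRep (monOne F n) := by
    induction S using Finset.induction_on with
    | empty => exact single_zero_mem_orbit Finset.univ p.2 (by simp)
    | insert i S hi ih =>
      rw [Finset.sum_insert hi, add_comm, ← monRep_xUnit_zpow i (p.1 i) (∑ i ∈ S, _, p.2)]
      exact apply_mem_orbit _ ih
  refine Submodule.eq_top_iff'.2 fun m => ?_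
  induction m using Finsupp.induction_linear with
  | zero => exact zero_mem _
  | add m m' hm hm' => exact add_mem hm hm'
  | single p r =>
    have hp := Submodule.smul_mem _ r (single_mem Finset.univ p)
    rwa [Finset.univ_sum_single, Finsupp.smul_single_one] at hp

/-- The basis of the Laurent–Clifford algebra formed by the monomials `X^α C^β`. -/
noncomputable def basis : Module.Basis ((Fin n → ℤ) × (Fin n → Bool)) F (LC F n) :=
  .ofRepr (LinearEquiv.ofBijective evalMon (bijective_of_orbit_eq_top monRep evalMon_monRep
    (by simp [monOne, evalMon_single, xmon, cmon]) orbit_monRep)).symm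

lemma basis_apply (p : (Fin n → ℤ) × (Fin n → Bool)) :
    (basis p : LC F n) = xmon p.1 * cmon p.2 := by
  simp [basis, Module.Basis.coe_ofRepr, evalMon_single]

end LC

end MonomialBasis

section Representation

open Equiv

variable {F} {n : ℕ}

namespace LC

lemma sig_x_lo (i : Fin (n - 1)) : sig i (x (lo i) : LC F n) = x (hi i) := by rw [sig_x, s_lo]

lemma sig_x_hi (i : Fin (n - 1)) : sig i (x (hi i) : LC F n) = x (lo i) := by rw [sig_x, s_hi]

lemma sig_c_lo (i : Fin (n - 1)) : sig i (c (lo i) : LC F n) = c (hi i) := by rw [sig_c, s_lo]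

lemma sig_c_hi (i : Fin (n - 1)) : sig i (c (hi i) : LC F n) = c (lo i) := by rw [sig_c, s_hi]

/-- The subalgebra of the elements commuting with `T_i`. -/
noncomputable def inert (i : Fin (n - 1)) : Subalgebra F (LC F n) where
  carrier := {a | sig i a = a ∧ del i a = 0}
  mul_mem' {a b} ha hb := ⟨by rw [map_mul, ha.1, hb.1], by
    rw [del_mul, ha.2, hb.2, mul_zero, zero_mul, add_zero]⟩
  add_mem' {a b} ha hb := ⟨by rw [map_add, ha.1, hb.1], by rw [map_add, ha.2, hb.2, add_zero]⟩
  algebraMap_mem' r := ⟨AlgHom.commutes _ r, del_algebraMap i r⟩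

lemma x_mem_inert {i : Fin (n - 1)} {k : Fin n} (hlo : k ≠ lo i) (hhi : k ≠ hi i) :
    (x k : LC F n) ∈ inert i :=
  ⟨by rw [sig_x, s_of_ne i hlo hhi], by rw [del_x, delX_of_ne hlo hhi]⟩

lemma c_mem_inert {i : Fin (n - 1)} {k : Fin n} (hlo : k ≠ lo i) (hhi : k ≠ hi i) :
    (c k : LC F n) ∈ inert i :=
  ⟨by rw [sig_c, s_of_ne i hlo hhi], by rw [del_c, delC_of_ne hhi]⟩

end LC

open LC

variable (F n) in
/-- The free left module over the Laurent–Clifford algebra on the symbols `T_w`, on which `H_n`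
will act by left multiplication. -/
abbrev PM : Type := Perm (Fin n) →₀ LC F n

/-- Left multiplication by `T_i` on `PM F n`, where `ξ` stands for `q - q⁻¹`. -/
noncomputable def tau (ξ : F) (i : Fin (n - 1)) : Module.End F (PM F n) :=
  Finsupp.lsum F fun w => Finsupp.lsingle (s i * w) ∘ₗ (sig i).toLinearMap +
    (if w⁻¹ (hi i) < w⁻¹ (lo i) then ξ else 0) • Finsupp.lsingle w ∘ₗ (sig i).toLinearMap +
    ξ • Finsupp.lsingle w ∘ₗ del i

lemma tau_single (ξ : F) (i : Fin (n - 1)) (w : Perm (Fin n)) (a : LC F n) :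
    tau ξ i (.single w a) = .single (s i * w) (sig i a) +
      (if w⁻¹ (hi i) < w⁻¹ (lo i) then ξ else 0) • .single w (sig i a) +
      ξ • .single w (del i a) :=
  (Finsupp.lsum_single ..).trans rfl

lemma s_mul_inv_apply (i : Fin (n - 1)) (w : Perm (Fin n)) (k : Fin n) :
    (s i * w)⁻¹ k = w⁻¹ (s i k) := by
  rw [mul_inv_rev, s_inv, Perm.mul_apply]

lemma tau_single_one_of_lt (ξ : F) {i : Fin (n - 1)} {w : Perm (Fin n)}
    (hlt : w⁻¹ (lo i) < w⁻¹ (hi i)) : tau ξ i (.single w 1) = .single (s i * w) 1 := by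
  rw [tau_single, if_neg hlt.not_gt, map_one, ← map_one (algebraMap F (LC F n)), del_algebraMap,
    Finsupp.single_zero, zero_smul, smul_zero, add_zero, add_zero]

lemma tau_single_one_of_gt (ξ : F) {i : Fin (n - 1)} {w : Perm (Fin n)}
    (hgt : w⁻¹ (hi i) < w⁻¹ (lo i)) :
    tau ξ i (.single w 1) = .single (s i * w) 1 + ξ • .single w 1 := by
  rw [tau_single, if_pos hgt, map_one, ← map_one (algebraMap F (LC F n)), del_algebraMap,
    Finsupp.single_zero, smul_zero, add_zero]

lemma tau_smul (ξ : F) (i : Fin (n - 1)) (a : LC F n) (m : PM F n) :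
    tau ξ i (a • m) = sig i a • tau ξ i m + ξ • del i a • m := by
  induction m using Finsupp.induction_linear with
  | zero => simp only [smul_zero, map_zero, add_zero]
  | add m m' hm hm' =>
    simp only [smul_add, map_add, hm, hm']
    abel
  | single w b =>
    simp only [Finsupp.smul_single, tau_single, smul_eq_mul, map_mul, del_mul, smul_add,
      Finsupp.single_add, mul_smul_comm]
    abel

lemma tau_smul_of_mem_inert (ξ : F) {i : Fin (n - 1)} {a : LC F n} (ha : a ∈ inert i)
    (m : PM F n) : tau ξ i (a • m) = a • tau ξ i m := by
  rw [tau_smul, ha.1, ha.2, zero_smul, smul_zero, add_zero]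

lemma tau_c_lo_smul (ξ : F) (i : Fin (n - 1)) (m : PM F n) :
    tau ξ i ((c (lo i) : LC F n) • m) = (c (hi i) : LC F n) • tau ξ i m := by
  rw [tau_smul, sig_c_lo, del_c, delC_of_ne (lo_ne_hi i), zero_smul, smul_zero, add_zero]

lemma tau_c_hi_smul (ξ : F) (i : Fin (n - 1)) (m : PM F n) :
    tau ξ i ((c (hi i) : LC F n) • m) = (c (lo i) : LC F n) • tau ξ i m +
      ξ • (c (hi i) - c (lo i) : LC F n) • m := by
  rw [tau_smul, sig_c_hi, del_c, delC_hi]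

lemma tau_x_lo_smul (ξ : F) (i : Fin (n - 1)) (m : PM F n) :
    tau ξ i ((x (lo i) : LC F n) • m) = (x (hi i) : LC F n) • tau ξ i m -
      ξ • (x (hi i) + c (lo i) * c (hi i) * x (lo i) : LC F n) • m := by
  rw [tau_smul, sig_x_lo, del_x, delX_lo, neg_smul, smul_neg, sub_eq_add_neg]

lemma tau_x_hi_smul (ξ : F) (i : Fin (n - 1)) (m : PM F n) :
    tau ξ i ((x (hi i) : LC F n) • m) = (x (lo i) : LC F n) • tau ξ i m +
      ξ • (x (hi i) - c (lo i) * c (hi i) * x (hi i) : LC F n) • m := by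
  rw [tau_smul, sig_x_hi, del_x, delX_hi]

lemma c_smul_c_smul (k : Fin n) (m : PM F n) : (c k : LC F n) • (c k : LC F n) • m = m := by
  rw [← mul_smul, c_mul_c, one_smul]

lemma c_smul_anti {k l : Fin n} (hkl : k ≠ l) (m : PM F n) :
    (c k : LC F n) • (c l : LC F n) • m = -((c l : LC F n) • (c k : LC F n) • m) := by
  rw [← mul_smul, c_anti hkl, neg_smul, mul_smul]

section Stable

variable {ξ : F} {K : Submodule F (PM F n)}

lemma single_one_mem_of_stable {S : Set (Fin (n - 1))}
    (hτ : ∀ i ∈ S, ∀ m ∈ K, tau ξ i m ∈ K)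
    (hmin : ∀ w : Perm (Fin n), (∀ i ∈ S, w⁻¹ (lo i) < w⁻¹ (hi i)) → .single w 1 ∈ K)
    (w : Perm (Fin n)) : .single w 1 ∈ K := by
  induction hl : len w using Nat.strong_induction_on generalizing w with
  | _ l ih =>
    by_cases hdescent : ∃ i ∈ S, w⁻¹ (hi i) < w⁻¹ (lo i)
    · obtain ⟨i, hiS, hgt⟩ := hdescent
      have hlen := len_s_mul_of_gt hgt
      have hlt : (s i * w)⁻¹ (lo i) < (s i * w)⁻¹ (hi i) := by
        rwa [s_mul_inv_apply, s_mul_inv_apply, s_lo, s_hi]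
      rw [← s_mul_s_mul i w, ← tau_single_one_of_lt ξ hlt]
      exact hτ i hiS _ (ih _ (by omega) _ rfl)
    · push Not at hdescent
      exact hmin w fun i hiS =>
        (hdescent i hiS).lt_of_ne ((w⁻¹).injective.ne (lo_ne_hi i))

lemma eq_top_of_stable {S : Set (Fin (n - 1))}
    (hx : ∀ k, ∀ m ∈ K, (x k : LC F n) • m ∈ K) (hc : ∀ k, ∀ m ∈ K, (c k : LC F n) • m ∈ K)
    (hτ : ∀ i ∈ S, ∀ m ∈ K, tau ξ i m ∈ K)
    (hmin : ∀ w : Perm (Fin n), (∀ i ∈ S, w⁻¹ (lo i) < w⁻¹ (hi i)) → .single w 1 ∈ K) :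
    K = ⊤ := by
  have smul_mem (a : LC F n) : ∀ m ∈ K, a • m ∈ K := by
    induction a using LC.induction with
    | algebraMap r => exact fun m hm => by rw [algebraMap_smul]; exact K.smul_mem r hm
    | x k => exact hx k
    | c k => exact hc k
    | mul a b ha hb => exact fun m hm => by rw [mul_smul]; exact ha _ (hb m hm)
    | add a b ha hb => exact fun m hm => by rw [add_smul]; exact K.add_mem (ha m hm) (hb m hm)
  refine Submodule.eq_top_iff'.2 fun m => ?_
  induction m using Finsupp.induction_linear with
  | zero => exact K.zero_mem
  | add m m' hm hm' => exact K.add_mem hm hm'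
  | single w a =>
    rw [← Finsupp.smul_single_one]
    exact smul_mem a _ (single_one_mem_of_stable hτ hmin w)

lemma c_hi_smul_mem {i : Fin (n - 1)} (hτ : ∀ m ∈ K, tau ξ i m ∈ K)
    (hquad : ∀ m ∈ K, tau ξ i (tau ξ i m) = ξ • tau ξ i m + m)
    (hc : ∀ m ∈ K, (c (lo i) : LC F n) • m ∈ K) {m : PM F n} (hm : m ∈ K) :
    (c (hi i) : LC F n) • m ∈ K := by
  have heq : (c (hi i) : LC F n) • m = tau ξ i ((c (lo i) : LC F n) • (tau ξ i m - ξ • m)) := by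
    rw [tau_c_lo_smul, map_sub, map_smul, hquad m hm, add_sub_cancel_left]
  rw [heq]
  exact hτ _ (hc _ (K.sub_mem (hτ m hm) (K.smul_mem ξ hm)))

lemma x_hi_smul_mem {i : Fin (n - 1)} (hτ : ∀ m ∈ K, tau ξ i m ∈ K)
    (hquad : ∀ m ∈ K, tau ξ i (tau ξ i m) = ξ • tau ξ i m + m)
    (hc : ∀ m ∈ K, (c (lo i) : LC F n) • m ∈ K) (hx : ∀ m ∈ K, (x (lo i) : LC F n) • m ∈ K)
    {m : PM F n} (hm : m ∈ K) : (x (hi i) : LC F n) • m ∈ K := by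
  have heq : (x (hi i) : LC F n) • m = tau ξ i ((x (lo i) : LC F n) • tau ξ i m) +
      ξ • (c (lo i) : LC F n) • (c (hi i) : LC F n) • (x (lo i) : LC F n) • tau ξ i m := by
    rw [tau_x_lo_smul, hquad m hm, smul_add (x (hi i)), smul_comm (x (hi i)) ξ, add_smul, mul_smul,
      mul_smul, smul_add ξ]
    abel
  have hxm := hx _ (hτ m hm)
  rw [heq]
  exact K.add_mem (hτ _ hxm) (K.smul_mem ξ (hc _ (c_hi_smul_mem hτ hquad hc hxm)))

lemma eq_top_of_stable_lo {i : Fin (n - 1)} (hτ : ∀ m ∈ K, tau ξ i m ∈ K)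
    (hquad : ∀ m ∈ K, tau ξ i (tau ξ i m) = ξ • tau ξ i m + m)
    (hc : ∀ m ∈ K, (c (lo i) : LC F n) • m ∈ K) (hx : ∀ m ∈ K, (x (lo i) : LC F n) • m ∈ K)
    (hfar : ∀ k, k ≠ lo i → k ≠ hi i → ∀ m ∈ K,
      (x k : LC F n) • m ∈ K ∧ (c k : LC F n) • m ∈ K)
    (hmin : ∀ w : Perm (Fin n), w⁻¹ (lo i) < w⁻¹ (hi i) → .single w 1 ∈ K) : K = ⊤ := by
  refine eq_top_of_stable (ξ := ξ) (S := {i}) (fun k => ?_) (fun k => ?_)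
    (by rintro _ rfl; exact hτ) fun w hw => hmin w (hw i rfl)
  · rcases eq_lo_or_eq_hi_or_ne i k with rfl | rfl | ⟨hlo, hhi⟩
    · exact hx
    · exact fun _ => x_hi_smul_mem hτ hquad hc hx
    · exact fun m hm => (hfar k hlo hhi m hm).1
  · rcases eq_lo_or_eq_hi_or_ne i k with rfl | rfl | ⟨hlo, hhi⟩
    · exact hc
    · exact fun _ => c_hi_smul_mem hτ hquad hc
    · exact fun m hm => (hfar k hlo hhi m hm).2

end Stable

lemma tau_tau_x_lo_smul {ξ : F} {i : Fin (n - 1)} {m : PM F n}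
    (hm : tau ξ i (tau ξ i m) = ξ • tau ξ i m + m) :
    tau ξ i (tau ξ i ((x (lo i) : LC F n) • m)) =
      ξ • tau ξ i ((x (lo i) : LC F n) • m) + (x (lo i) : LC F n) • m := by
  simp only [tau_x_lo_smul, tau_x_hi_smul, tau_c_lo_smul, tau_c_hi_smul, map_sub, map_neg, map_add,
    map_smul, add_smul, sub_smul, mul_smul, smul_add, smul_sub, smul_comm (_ : LC F n) ξ,
    c_smul_anti (lo_ne_hi i), smul_neg, c_smul_c_smul, hm]
  abel

lemma tau_tau_single_one (ξ : F) {i : Fin (n - 1)} {w : Perm (Fin n)}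
    (hlt : w⁻¹ (lo i) < w⁻¹ (hi i)) :
    tau ξ i (tau ξ i (.single w 1)) = ξ • tau ξ i (.single w 1) + .single w 1 := by
  have hgt : (s i * w)⁻¹ (hi i) < (s i * w)⁻¹ (lo i) := by
    rwa [s_mul_inv_apply, s_mul_inv_apply, s_lo, s_hi]
  rw [tau_single_one_of_lt ξ hlt, tau_single_one_of_gt ξ hgt, s_mul_s_mul, add_comm]

lemma tau_mul_tau_self (ξ : F) (i : Fin (n - 1)) :
    tau ξ i * tau ξ i = (ξ • tau ξ i + 1 : Module.End F (PM F n)) := by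
  let K : Submodule F (PM F n) := LinearMap.eqLocus (tau ξ i * tau ξ i) (ξ • tau ξ i + 1)
  have mem_K {m : PM F n} : m ∈ K ↔ tau ξ i (tau ξ i m) = ξ • tau ξ i m + m := Iff.rfl
  have hτ : ∀ m ∈ K, tau ξ i m ∈ K := fun m hm => by
    rw [mem_K] at hm ⊢
    rw [hm, map_add, map_smul, hm]
  have hc : ∀ m ∈ K, (c (lo i) : LC F n) • m ∈ K := fun m hm => by
    rw [mem_K] at hm ⊢
    simp only [tau_c_lo_smul, tau_c_hi_smul, hm, smul_add, smul_sub, sub_smul,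
      smul_comm (c (lo i) : LC F n) ξ]
    abel
  have hx : ∀ m ∈ K, (x (lo i) : LC F n) • m ∈ K := fun m hm =>
    mem_K.2 (tau_tau_x_lo_smul (mem_K.1 hm))
  have inert_smul {a : LC F n} (ha : a ∈ inert i) {m : PM F n} (hm : m ∈ K) : a • m ∈ K := by
    rw [mem_K] at hm ⊢
    rw [tau_smul_of_mem_inert ξ ha, tau_smul_of_mem_inert ξ ha, hm, smul_add, smul_comm]
  exact LinearMap.eqLocus_eq_top.1 (eq_top_of_stable_lo hτ (fun _ => mem_K.1) hc hx
    (fun _ hlo hhi _ hm =>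
      ⟨inert_smul (x_mem_inert hlo hhi) hm, inert_smul (c_mem_inert hlo hhi) hm⟩)
    fun w hw => mem_K.2 (tau_tau_single_one ξ hw))

lemma tau_tau (ξ : F) (i : Fin (n - 1)) (m : PM F n) :
    tau ξ i (tau ξ i m) = ξ • tau ξ i m + m :=
  LinearMap.congr_fun (tau_mul_tau_self ξ i) m

end Representation

section BraidRelations

open Equiv LC

variable {F} {n : ℕ}

section Far

variable {i j : Fin (n - 1)}

lemma ne_lo_and_ne_hi_of_far (hij : (i : ℕ) + 1 < j ∨ (j : ℕ) + 1 < i) {k : Fin n}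
    (hk : k = lo j ∨ k = hi j) : k ≠ lo i ∧ k ≠ hi i := by
  simp only [lo, hi, Fin.ext_iff, ne_eq] at hk ⊢
  omega

lemma s_apply_ne_of_far (hij : (i : ℕ) + 1 < j ∨ (j : ℕ) + 1 < i) {k : Fin n}
    (hk : k ≠ lo i ∧ k ≠ hi i) : s j k ≠ lo i ∧ s j k ≠ hi i := by
  rcases eq_lo_or_eq_hi_or_ne j k with rfl | rfl | ⟨hlo, hhi⟩
  · exact s_lo j ▸ ne_lo_and_ne_hi_of_far hij (.inr rfl)
  · exact s_hi j ▸ ne_lo_and_ne_hi_of_far hij (.inl rfl)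
  · rwa [s_of_ne j hlo hhi]

lemma s_comm_of_far (hij : (i : ℕ) + 1 < j ∨ (j : ℕ) + 1 < i) : s i * s j = s j * s i := by
  obtain ⟨hll, hlh⟩ := ne_lo_and_ne_hi_of_far hij (.inl rfl)
  obtain ⟨hhl, hhh⟩ := ne_lo_and_ne_hi_of_far hij (.inr rfl)
  have hconj := mul_swap_eq_swap_mul (s i) (lo j) (hi j)
  rwa [s_of_ne i hll hlh, s_of_ne i hhl hhh] at hconj

lemma delX_mem_inert_of_far (hij : (i : ℕ) + 1 < j ∨ (j : ℕ) + 1 < i) (k : Fin n) :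
    (delX j k : LC F n) ∈ inert i := by
  obtain ⟨hll, hlh⟩ := ne_lo_and_ne_hi_of_far hij (.inl rfl)
  obtain ⟨hhl, hhh⟩ := ne_lo_and_ne_hi_of_far hij (.inr rfl)
  have hcc : (c (lo j) * c (hi j) : LC F n) ∈ inert i :=
    mul_mem (c_mem_inert hll hlh) (c_mem_inert hhl hhh)
  unfold delX
  split_ifs
  · exact neg_mem (add_mem (x_mem_inert hhl hhh) (mul_mem hcc (x_mem_inert hll hlh)))
  · exact sub_mem (x_mem_inert hhl hhh) (mul_mem hcc (x_mem_inert hhl hhh))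
  · exact zero_mem _

lemma delC_mem_inert_of_far (hij : (i : ℕ) + 1 < j ∨ (j : ℕ) + 1 < i) (k : Fin n) :
    (delC j k : LC F n) ∈ inert i := by
  obtain ⟨hll, hlh⟩ := ne_lo_and_ne_hi_of_far hij (.inl rfl)
  obtain ⟨hhl, hhh⟩ := ne_lo_and_ne_hi_of_far hij (.inr rfl)
  unfold delC
  split_ifs
  · exact sub_mem (c_mem_inert hhl hhh) (c_mem_inert hll hlh)
  · exact zero_mem _

lemma tau_comm_smul_of_mem_inert {ξ : F} {a : LC F n} {m : PM F n} (ha : a ∈ inert i)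
    (hsig : sig j a ∈ inert i) (hdel : del j a ∈ inert i)
    (hm : tau ξ i (tau ξ j m) = tau ξ j (tau ξ i m)) :
    tau ξ i (tau ξ j (a • m)) = tau ξ j (tau ξ i (a • m)) := by
  rw [tau_smul_of_mem_inert ξ ha, tau_smul ξ j, tau_smul ξ j, map_add,
    tau_smul_of_mem_inert ξ hsig, LinearMap.map_smul, tau_smul_of_mem_inert ξ hdel, hm]

lemma tau_comm_x_smul {ξ : F} (hij : (i : ℕ) + 1 < j ∨ (j : ℕ) + 1 < i) {k : Fin n}
    (hk : k ≠ lo i ∧ k ≠ hi i) {m : PM F n} (hm : tau ξ i (tau ξ j m) = tau ξ j (tau ξ i m)) :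
    tau ξ i (tau ξ j ((x k : LC F n) • m)) = tau ξ j (tau ξ i ((x k : LC F n) • m)) := by
  have hsk := s_apply_ne_of_far hij hk
  refine tau_comm_smul_of_mem_inert (x_mem_inert hk.1 hk.2) ?_ ?_ hm
  · exact sig_x (F := F) j k ▸ x_mem_inert hsk.1 hsk.2
  · exact del_x (F := F) j k ▸ delX_mem_inert_of_far hij k

lemma tau_comm_c_smul {ξ : F} (hij : (i : ℕ) + 1 < j ∨ (j : ℕ) + 1 < i) {k : Fin n}
    (hk : k ≠ lo i ∧ k ≠ hi i) {m : PM F n} (hm : tau ξ i (tau ξ j m) = tau ξ j (tau ξ i m)) :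
    tau ξ i (tau ξ j ((c k : LC F n) • m)) = tau ξ j (tau ξ i ((c k : LC F n) • m)) := by
  have hsk := s_apply_ne_of_far hij hk
  refine tau_comm_smul_of_mem_inert (c_mem_inert hk.1 hk.2) ?_ ?_ hm
  · exact sig_c (F := F) j k ▸ c_mem_inert hsk.1 hsk.2
  · exact del_c (F := F) j k ▸ delC_mem_inert_of_far hij k

lemma tau_tau_single_one_of_far (ξ : F) (hij : (i : ℕ) + 1 < j ∨ (j : ℕ) + 1 < i)
    {w : Perm (Fin n)} (hwi : w⁻¹ (lo i) < w⁻¹ (hi i)) (hwj : w⁻¹ (lo j) < w⁻¹ (hi j)) :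
    tau ξ i (tau ξ j (.single w 1)) = .single (s i * s j * w) 1 := by
  obtain ⟨hll, hlh⟩ := ne_lo_and_ne_hi_of_far hij.symm (.inl rfl)
  obtain ⟨hhl, hhh⟩ := ne_lo_and_ne_hi_of_far hij.symm (.inr rfl)
  have hlt : (s j * w)⁻¹ (lo i) < (s j * w)⁻¹ (hi i) := by
    rwa [s_mul_inv_apply, s_mul_inv_apply, s_of_ne j hll hlh, s_of_ne j hhl hhh]
  rw [tau_single_one_of_lt ξ hwj, tau_single_one_of_lt ξ hlt, mul_assoc]

lemma tau_mul_tau_of_far (ξ : F) (hij : (i : ℕ) + 1 < j ∨ (j : ℕ) + 1 < i) :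
    tau ξ i * tau ξ j = (tau ξ j * tau ξ i : Module.End F (PM F n)) := by
  let K : Submodule F (PM F n) := LinearMap.eqLocus (tau ξ i * tau ξ j) (tau ξ j * tau ξ i)
  have mem_K {m : PM F n} : m ∈ K ↔ tau ξ i (tau ξ j m) = tau ξ j (tau ξ i m) := Iff.rfl
  have ne_or_ne (k : Fin n) : (k ≠ lo i ∧ k ≠ hi i) ∨ (k ≠ lo j ∧ k ≠ hi j) := by
    by_cases hk : k = lo j ∨ k = hi j
    · exact .inl (ne_lo_and_ne_hi_of_far hij hk)
    · exact .inr (not_or.1 hk)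
  suffices hK : K = ⊤ from LinearMap.eqLocus_eq_top.1 hK
  refine eq_top_of_stable (ξ := ξ) (S := {i, j}) (fun k m hm => ?_) (fun k m hm => ?_) ?_
    fun w hw => mem_K.2 ?_
  · rcases ne_or_ne k with hk | hk
    · exact mem_K.2 (tau_comm_x_smul hij hk (mem_K.1 hm))
    · exact mem_K.2 (tau_comm_x_smul hij.symm hk (mem_K.1 hm).symm).symm
  · rcases ne_or_ne k with hk | hk
    · exact mem_K.2 (tau_comm_c_smul hij hk (mem_K.1 hm))
    · exact mem_K.2 (tau_comm_c_smul hij.symm hk (mem_K.1 hm).symm).symm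
  · rintro _ (rfl | rfl) m hm <;> rw [mem_K] at hm ⊢
    · rw [← hm, tau_tau, tau_tau, map_add, map_smul, hm]
    · rw [hm, tau_tau, tau_tau, map_add, map_smul, hm]
  · have hwi := hw i (.inl rfl)
    have hwj := hw j (.inr rfl)
    rw [tau_tau_single_one_of_far ξ hij hwi hwj, tau_tau_single_one_of_far ξ hij.symm hwj hwi,
      s_comm_of_far hij]

end Far

section Braid

variable {i j : Fin (n - 1)}

lemma lo_ne_of_adj (hij : hi i = lo j) : lo i ≠ lo j ∧ lo i ≠ hi j :=
  ⟨hij ▸ lo_ne_hi i, ((hij ▸ lo_lt_hi i).trans (lo_lt_hi j)).ne⟩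

lemma hi_ne_of_adj (hij : hi i = lo j) : hi j ≠ lo i ∧ hi j ≠ hi i :=
  ⟨(lo_ne_of_adj hij).2.symm, hij ▸ (lo_ne_hi j).symm⟩

lemma s_braid (hij : hi i = lo j) : s i * s j * s i = s j * s i * s j := by
  obtain ⟨hll, hlh⟩ := lo_ne_of_adj hij
  obtain ⟨hhl, hhh⟩ := hi_ne_of_adj hij
  have hconj_i : s i * s j = swap (lo i) (hi j) * s i := by
    have := mul_swap_eq_swap_mul (s i) (lo j) (hi j)
    rwa [← hij, s_hi, s_of_ne i hhl hhh, hij] at this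
  have hconj_j : s j * s i = swap (lo i) (hi j) * s j := by
    have := mul_swap_eq_swap_mul (s j) (lo i) (hi i)
    rwa [s_of_ne j hll hlh, hij, s_lo, ← hij] at this
  rw [hconj_i, hconj_j, mul_assoc, mul_assoc, s_mul_s, s_mul_s]

lemma tau_tau_tau_c_lo_smul {ξ : F} (hij : hi i = lo j) {m : PM F n}
    (hm : tau ξ i (tau ξ j (tau ξ i m)) = tau ξ j (tau ξ i (tau ξ j m))) :
    tau ξ i (tau ξ j (tau ξ i ((c (lo i) : LC F n) • m))) =
      tau ξ j (tau ξ i (tau ξ j ((c (lo i) : LC F n) • m))) := by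
  have hlo := lo_ne_of_adj hij
  have hhi := hi_ne_of_adj hij
  rw [tau_c_lo_smul, hij, tau_c_lo_smul, tau_smul_of_mem_inert ξ (c_mem_inert hhi.1 hhi.2),
    tau_smul_of_mem_inert ξ (c_mem_inert hlo.1 hlo.2), tau_c_lo_smul, hij, tau_c_lo_smul, hm]

lemma tau_tau_tau_x_lo_smul {ξ : F} (hij : hi i = lo j) {m : PM F n}
    (hm : tau ξ i (tau ξ j (tau ξ i m)) = tau ξ j (tau ξ i (tau ξ j m))) :
    tau ξ i (tau ξ j (tau ξ i ((x (lo i) : LC F n) • m))) =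
      tau ξ j (tau ξ i (tau ξ j ((x (lo i) : LC F n) • m))) := by
  obtain ⟨hll, hlh⟩ := lo_ne_of_adj hij
  obtain ⟨hhl, hhh⟩ := hi_ne_of_adj hij
  have c_lo := tau_smul_of_mem_inert (F := F) ξ (c_mem_inert hll hlh)
  have x_lo := tau_smul_of_mem_inert (F := F) ξ (x_mem_inert hll hlh)
  have c_hi := tau_smul_of_mem_inert (F := F) ξ (c_mem_inert hhl hhh)
  have x_hi := tau_smul_of_mem_inert (F := F) ξ (x_mem_inert hhl hhh)
  have c_mid := hij ▸ tau_c_hi_smul ξ i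
  have x_mid := hij ▸ tau_x_hi_smul ξ i
  have c_lo' := hij ▸ tau_c_lo_smul ξ i
  have x_lo' := hij ▸ tau_x_lo_smul ξ i
  simp only [tau_x_lo_smul, tau_c_lo_smul, c_lo, x_lo, c_lo', x_lo', c_mid, x_mid, c_hi, x_hi,
    map_sub, map_add, map_smul, add_smul, sub_smul, mul_smul, smul_add, smul_sub, smul_neg, hm,
    tau_tau, c_smul_c_smul, c_smul_anti hhl, c_smul_anti hll.symm, c_smul_anti (lo_ne_hi j).symm,
    smul_comm (_ : LC F n) ξ]
  abel

lemma tau_tau_tau_single_one (ξ : F) (hij : hi i = lo j) {w : Perm (Fin n)}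
    (hwi : w⁻¹ (lo i) < w⁻¹ (hi i)) (hwj : w⁻¹ (lo j) < w⁻¹ (hi j)) :
    tau ξ i (tau ξ j (tau ξ i (.single w 1))) = .single (s i * s j * s i * w) 1 ∧
      tau ξ j (tau ξ i (tau ξ j (.single w 1))) = .single (s j * s i * s j * w) 1 := by
  obtain ⟨hll, hlh⟩ := lo_ne_of_adj hij
  obtain ⟨hhl, hhh⟩ := hi_ne_of_adj hij
  have hsi : s i (lo j) = lo i := hij ▸ s_hi i
  have hsj : s j (hi i) = hi j := hij ▸ s_lo j
  have hwij : w⁻¹ (lo i) < w⁻¹ (hi j) := hwi.trans (hij ▸ hwj)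
  have hsi' : s i (hi j) = hi j := s_of_ne i hhl hhh
  have hsj' : s j (lo i) = lo i := s_of_ne j hll hlh
  constructor
  · rw [tau_single_one_of_lt ξ hwi, tau_single_one_of_lt, tau_single_one_of_lt, mul_assoc,
      mul_assoc]
    · simpa only [s_mul_inv_apply, hsj, hsj', hsi', s_lo, hij]
    · simpa only [s_mul_inv_apply, hsi, hsi']
  · rw [tau_single_one_of_lt ξ hwj, tau_single_one_of_lt, tau_single_one_of_lt, mul_assoc,
      mul_assoc]
    · simpa only [s_mul_inv_apply, hsi, hsi', hsj', s_hi, ← hij]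
    · simpa only [s_mul_inv_apply, hsj, hsj']

lemma tau_braid (ξ : F) (hij : hi i = lo j) :
    tau ξ i * tau ξ j * tau ξ i = (tau ξ j * tau ξ i * tau ξ j : Module.End F (PM F n)) := by
  let K : Submodule F (PM F n) :=
    LinearMap.eqLocus (tau ξ i * tau ξ j * tau ξ i) (tau ξ j * tau ξ i * tau ξ j)
  have mem_K {m : PM F n} : m ∈ K ↔
    tau ξ i (tau ξ j (tau ξ i m)) = tau ξ j (tau ξ i (tau ξ j m)) := Iff.rfl
  have hτi : ∀ m ∈ K, tau ξ i m ∈ K := fun m hm => by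
    rw [mem_K] at hm ⊢
    rw [hm, tau_tau, tau_tau, map_add, map_smul, map_add, map_smul, hm]
  have hτj : ∀ m ∈ K, tau ξ j m ∈ K := fun m hm => by
    rw [mem_K] at hm ⊢
    rw [← hm, tau_tau, tau_tau, map_add, map_smul, map_add, map_smul, hm]
  have hx_lo : ∀ m ∈ K, (x (lo i) : LC F n) • m ∈ K := fun m hm =>
    mem_K.2 (tau_tau_tau_x_lo_smul hij (mem_K.1 hm))
  have hc_lo : ∀ m ∈ K, (c (lo i) : LC F n) • m ∈ K := fun m hm =>
    mem_K.2 (tau_tau_tau_c_lo_smul hij (mem_K.1 hm))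
  have hx_mid : ∀ m ∈ K, (x (lo j) : LC F n) • m ∈ K := fun m hm =>
    hij ▸ x_hi_smul_mem hτi (fun m _ => tau_tau ξ i m) hc_lo hx_lo hm
  have hc_mid : ∀ m ∈ K, (c (lo j) : LC F n) • m ∈ K := fun m hm =>
    hij ▸ c_hi_smul_mem hτi (fun m _ => tau_tau ξ i m) hc_lo hm
  have inert_smul {a : LC F n} (hai : a ∈ inert i) (haj : a ∈ inert j) :
      ∀ m ∈ K, a • m ∈ K := fun m hm => by
    rw [mem_K] at hm ⊢
    simp only [tau_smul_of_mem_inert ξ hai, tau_smul_of_mem_inert ξ haj, hm]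
  suffices hK : K = ⊤ from LinearMap.eqLocus_eq_top.1 hK
  refine eq_top_of_stable (ξ := ξ) (S := {i, j}) (fun k => ?_) (fun k => ?_) ?_
    fun w hw => mem_K.2 ?_
  · rcases eq_lo_or_eq_hi_or_ne j k with rfl | rfl | ⟨hlo, hhi⟩
    · exact hx_mid
    · exact fun _ => x_hi_smul_mem hτj (fun m _ => tau_tau ξ j m) hc_mid hx_mid
    by_cases hk : k = lo i
    · exact hk ▸ hx_lo
    · exact inert_smul (x_mem_inert hk (hij ▸ hlo)) (x_mem_inert hlo hhi)
  · rcases eq_lo_or_eq_hi_or_ne j k with rfl | rfl | ⟨hlo, hhi⟩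
    · exact hc_mid
    · exact fun _ => c_hi_smul_mem hτj (fun m _ => tau_tau ξ j m) hc_mid
    by_cases hk : k = lo i
    · exact hk ▸ hc_lo
    · exact inert_smul (c_mem_inert hk (hij ▸ hlo)) (c_mem_inert hlo hhi)
  · rintro _ (rfl | rfl)
    exacts [hτi, hτj]
  · obtain ⟨hiji, hjij⟩ := tau_tau_tau_single_one ξ hij (hw i (.inl rfl)) (hw j (.inr rfl))
    rw [hiji, hjij, s_braid hij]

end Braid

end BraidRelations

section LeftRegular

open Equiv LC

variable {F} {n : ℕ}

lemma cross_iff_of_quadratic {R : Type*} [Ring R] [Algebra F R] {ξ : F} {t a b d : R}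
    (hquad : t * t = ξ • t + 1) :
    (t + ξ • d) * a * t = b ↔ t * a + ξ • (b + d * a) = b * t := by
  constructor <;> intro heq
  · have hmul : (t + ξ • d) * a * (t * t) = b * t := by rw [← mul_assoc, heq]
    rw [← hmul, hquad, mul_add, mul_smul_comm, heq, mul_one, add_mul, smul_mul_assoc, smul_add]
    abel
  · have hmul : (t * a + ξ • (b + d * a)) * t = b * (t * t) := by rw [heq, mul_assoc]
    rw [hquad] at hmul
    simp only [add_mul, smul_add, smul_mul_assoc, mul_add, mul_one, mul_smul_comm] at hmul ⊢
    refine add_right_cancel (b := ξ • (b * t)) ?_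
    rw [add_comm b, ← hmul]
    abel

variable (F n) in
/-- The action of the Laurent–Clifford algebra on `PM F n`. -/
noncomputable def lcMul : LC F n →ₐ[F] Module.End F (PM F n) := Algebra.lsmul F F (PM F n)

lemma lcMul_apply (a : LC F n) (m : PM F n) : lcMul F n a m = a • m := rfl

lemma tau_mul_lcMul_of_mem_inert (ξ : F) {i : Fin (n - 1)} {a : LC F n} (ha : a ∈ inert i) :
    tau ξ i * lcMul F n a = lcMul F n a * tau ξ i :=
  LinearMap.ext fun m => by
    rw [Module.End.mul_apply, Module.End.mul_apply, lcMul_apply, lcMul_apply,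
      tau_smul_of_mem_inert ξ ha]

lemma tau_mul_lcMul_c_lo (ξ : F) (i : Fin (n - 1)) :
    tau ξ i * lcMul F n (c (lo i)) = lcMul F n (c (hi i)) * tau ξ i :=
  LinearMap.ext fun m => by
    rw [Module.End.mul_apply, Module.End.mul_apply, lcMul_apply, lcMul_apply, tau_c_lo_smul]

lemma tau_mul_lcMul_x_lo (ξ : F) (i : Fin (n - 1)) :
    tau ξ i * lcMul F n (x (lo i)) + ξ • (lcMul F n (x (hi i)) +
      lcMul F n (c (lo i)) * lcMul F n (c (hi i)) * lcMul F n (x (lo i))) =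
        lcMul F n (x (hi i)) * tau ξ i :=
  LinearMap.ext fun m => by
    rw [← map_mul, ← map_mul, ← map_add, LinearMap.add_apply, LinearMap.smul_apply,
      Module.End.mul_apply, Module.End.mul_apply, lcMul_apply, lcMul_apply, lcMul_apply,
      tau_x_lo_smul, sub_add_cancel]

lemma tau_cross (ξ : F) (i : Fin (n - 1)) :
    (tau ξ i + ξ • (lcMul F n (c (lo i)) * lcMul F n (c (hi i)))) * lcMul F n (x (lo i)) *
      tau ξ i = lcMul F n (x (hi i)) :=
  (cross_iff_of_quadratic (R := Module.End F (PM F n)) (ξ := ξ) (t := tau ξ i)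
    (a := lcMul F n (x (lo i))) (b := lcMul F n (x (hi i)))
    (d := lcMul F n (c (lo i)) * lcMul F n (c (hi i)))
    (tau_mul_tau_self ξ i)).2 (tau_mul_lcMul_x_lo ξ i)

lemma y_mem_inert {i : Fin (n - 1)} {k : Fin n} (hlo : k ≠ lo i) (hhi : k ≠ hi i) :
    (y k : LC F n) ∈ inert i :=
  mul_mem (mul_mem (c_mem_inert hlo hhi) (x_mem_inert hlo hhi)) (c_mem_inert hlo hhi)

variable (F) in
/-- The representation of `H_n` on `PM F n`, which will turn out to be its left regular one. -/
noncomputable def rho (q : F) (n : ℕ) : H F q n →ₐ[F] Module.End F (PM F n) :=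
  RingQuot.liftAlgHom F ⟨FreeAlgebra.lift F fun
    | .X i => lcMul F n (x i)
    | .Xinv i => lcMul F n (y i)
    | .C i => lcMul F n (c i)
    | .T i => tau (q - q⁻¹) i, by
    intro a b hab
    cases hab <;> simp only [fx, fxinv, fc, ft, map_mul, map_add, map_one, map_neg, map_smul,
      FreeAlgebra.lift_ι_apply]
    case XXinv i => rw [← map_mul, x_mul_y, map_one]
    case XinvX i => rw [← map_mul, y_mul_x, map_one]
    case XX i j => rw [← map_mul, x_comm, map_mul]
    case XiXi i j => rw [← map_mul, y_comm, map_mul]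
    case XXi i j _ => rw [← map_mul, x_mul_y_comm, map_mul]
    case CC i => rw [← map_mul, c_mul_c, map_one]
    case Canti i j hij => rw [← map_mul, c_anti hij, map_neg, map_mul]
    case CX i => rw [← map_mul, c_mul_x_self, map_mul]
    case CXi i => rw [← map_mul, c_mul_y_self, map_mul]
    case CXo i j hij => rw [← map_mul, c_mul_x hij, map_mul]
    case CXio i j hij => rw [← map_mul, c_mul_y hij, map_mul]
    case Tquad i => exact tau_mul_tau_self _ i
    case Tbraid i j hij => exact tau_braid _ (Fin.ext hij.symm)
    case TTfar i j hij => exact tau_mul_tau_of_far _ (.inl hij)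
    case TC i => exact tau_mul_lcMul_c_lo _ i
    case TCo i j hlo hhi => exact tau_mul_lcMul_of_mem_inert _ (c_mem_inert hlo hhi)
    case TXo i j hlo hhi => exact tau_mul_lcMul_of_mem_inert _ (x_mem_inert hlo hhi)
    case TXio i j hlo hhi => exact tau_mul_lcMul_of_mem_inert _ (y_mem_inert hlo hhi)
    case cross i => exact tau_cross _ i⟩

lemma rho_X (q : F) (i : Fin n) : rho F q n (X F q i) = lcMul F n (x i) :=
  (RingQuot.liftAlgHom_mkAlgHom_apply _ _ _ _).trans (FreeAlgebra.lift_ι_apply _ _)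

lemma rho_Xinv (q : F) (i : Fin n) : rho F q n (Xinv F q i) = lcMul F n (y i) :=
  (RingQuot.liftAlgHom_mkAlgHom_apply _ _ _ _).trans (FreeAlgebra.lift_ι_apply _ _)

lemma rho_C (q : F) (i : Fin n) : rho F q n (C F q i) = lcMul F n (c i) :=
  (RingQuot.liftAlgHom_mkAlgHom_apply _ _ _ _).trans (FreeAlgebra.lift_ι_apply _ _)

lemma rho_T (q : F) (i : Fin (n - 1)) : rho F q n (T F q i) = tau (q - q⁻¹) i :=
  (RingQuot.liftAlgHom_mkAlgHom_apply _ _ _ _).trans (FreeAlgebra.lift_ι_apply _ _)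

end LeftRegular

section Relations

variable {F} {n : ℕ} (q : F)

lemma mkAlgHom_eq_of_rel {a b : FA F n} (hab : Rel F q n a b) :
    RingQuot.mkAlgHom F (Rel F q n) a = RingQuot.mkAlgHom F (Rel F q n) b :=
  RingQuot.mkAlgHom_rel F hab

lemma X_mul_Xinv (i : Fin n) : X F q i * Xinv F q i = 1 := by
  simpa only [X, Xinv, map_mul, map_one] using mkAlgHom_eq_of_rel q (.XXinv i)

lemma X_comm (i j : Fin n) : X F q i * X F q j = X F q j * X F q i := by
  simpa only [X, map_mul] using mkAlgHom_eq_of_rel q (.XX i j)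

lemma C_mul_C (i : Fin n) : C F q i * C F q i = 1 := by
  simpa only [C, map_mul, map_one] using mkAlgHom_eq_of_rel q (.CC i)

lemma C_anti {i j : Fin n} (hij : i ≠ j) : C F q i * C F q j = -(C F q j * C F q i) := by
  simpa only [C, map_mul, map_neg] using mkAlgHom_eq_of_rel q (.Canti i j hij)

lemma C_mul_X_self (i : Fin n) : C F q i * X F q i = Xinv F q i * C F q i := by
  simpa only [C, X, Xinv, map_mul] using mkAlgHom_eq_of_rel q (.CX i)

lemma C_mul_X {i j : Fin n} (hij : i ≠ j) : C F q i * X F q j = X F q j * C F q i := by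
  simpa only [C, X, map_mul] using mkAlgHom_eq_of_rel q (.CXo i j hij)

lemma T_mul_T (i : Fin (n - 1)) : T F q i * T F q i = (q - q⁻¹) • T F q i + 1 := by
  simpa only [T, map_mul, map_add, map_smul, map_one] using mkAlgHom_eq_of_rel q (.Tquad i)

lemma T_mul_C_lo (i : Fin (n - 1)) : T F q i * C F q (lo i) = C F q (hi i) * T F q i := by
  simpa only [T, C, map_mul] using mkAlgHom_eq_of_rel q (.TC i)

lemma T_mul_C_of_ne {i : Fin (n - 1)} {k : Fin n} (hlo : k ≠ lo i) (hhi : k ≠ hi i) :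
    T F q i * C F q k = C F q k * T F q i := by
  simpa only [T, C, map_mul] using mkAlgHom_eq_of_rel q (.TCo i k hlo hhi)

lemma T_mul_X_of_ne {i : Fin (n - 1)} {k : Fin n} (hlo : k ≠ lo i) (hhi : k ≠ hi i) :
    T F q i * X F q k = X F q k * T F q i := by
  simpa only [T, X, map_mul] using mkAlgHom_eq_of_rel q (.TXo i k hlo hhi)

lemma T_mul_X_lo (i : Fin (n - 1)) :
    T F q i * X F q (lo i) + (q - q⁻¹) • (X F q (hi i) +
      C F q (lo i) * C F q (hi i) * X F q (lo i)) = X F q (hi i) * T F q i := by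
  refine (cross_iff_of_quadratic (R := H F q n) (T_mul_T q i)).1 ?_
  simpa only [T, X, C, map_mul, map_add, map_smul] using mkAlgHom_eq_of_rel q (.cross i)

lemma isLaurentClifford_X_C :
    IsLaurentClifford (X F q : Fin n → H F q n) (C F q) where
  x_comm := X_comm q
  c_mul_c := C_mul_C q
  c_anti := C_anti q
  c_mul_x := C_mul_X q
  xc_mul_xc i := by
    rw [mul_assoc, ← mul_assoc (C F q i), C_mul_X_self, mul_assoc, C_mul_C, mul_one, X_mul_Xinv]

@[elab_as_elim]
lemma H.induction {P : H F q n → Prop} (algebraMap : ∀ r, P (algebraMap F _ r))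
    (X : ∀ i, P (X F q i)) (Xinv : ∀ i, P (Xinv F q i)) (C : ∀ i, P (C F q i))
    (T : ∀ i, P (T F q i)) (mul : ∀ a b, P a → P b → P (a * b))
    (add : ∀ a b, P a → P b → P (a + b)) (h : H F q n) : P h := by
  obtain ⟨a, rfl⟩ := RingQuot.mkAlgHom_surjective F (Rel F q n) h
  induction a using FreeAlgebra.induction with
  | grade0 r => rw [AlgHom.commutes]; exact algebraMap r
  | grade1 g =>
    cases g with
    | X i => exact X i
    | Xinv i => exact Xinv i
    | C i => exact C i
    | T i => exact T i
  | mul a b ha hb => rw [map_mul]; exact mul _ _ ha hb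
  | add a b ha hb => rw [map_add]; exact add _ _ ha hb

variable (n) in
/-- The Laurent–Clifford algebra maps to the subalgebra of `H_n` generated by the `X_i^{±1}` and
the `C_i`. -/
noncomputable def ofLC : LC F n →ₐ[F] H F q n := LC.lift (isLaurentClifford_X_C q)

lemma ofLC_x (i : Fin n) : ofLC n q (LC.x i) = X F q i := LC.lift_x _ _

lemma ofLC_c (i : Fin n) : ofLC n q (LC.c i) = C F q i := LC.lift_c _ _

lemma ofLC_y (i : Fin n) : ofLC n q (LC.y i) = Xinv F q i := by
  rw [LC.y, map_mul, map_mul, ofLC_c, ofLC_x, C_mul_X_self, mul_assoc, C_mul_C, mul_one]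

lemma ofLC_xUnit_zpow (i : Fin n) (a : ℤ) :
    ofLC n q ((LC.xUnit i ^ a : (LC F n)ˣ) : LC F n) = XZ F q i a := by
  rcases le_or_gt 0 a with ha | ha
  · lift a to ℕ using ha
    rw [XZ, if_pos (Int.natCast_nonneg a), zpow_natCast, Units.val_pow_eq_pow_val, map_pow,
      Int.toNat_natCast, ← ofLC_x]
    rfl
  · obtain ⟨b, rfl⟩ := Int.exists_eq_neg_ofNat ha.le
    rw [XZ, if_neg ha.not_ge, zpow_neg, zpow_natCast, ← inv_pow, Units.val_pow_eq_pow_val, map_pow,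
      neg_neg, Int.toNat_natCast, ← ofLC_y]
    rfl

lemma ofLC_xmon (α : Fin n → ℤ) : ofLC n q (LC.xmon α) = Xmon F q α := by
  simp only [LC.xmon, Xmon, map_list_prod, List.map_map, Function.comp_def, ofLC_xUnit_zpow]

lemma ofLC_cmon (β : Fin n → Bool) : ofLC n q (LC.cmon β) = Cmon F q β := by
  simp only [LC.cmon, Cmon, map_list_prod, List.map_map, Function.comp_def, apply_ite (ofLC n q),
    ofLC_c, map_one]

end Relations

section StandardBasis

open Equiv LC

variable {F} {n : ℕ} {q : F} {Tw : Perm (Fin n) → H F q n}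

namespace IsTFam

lemma mul_s_of_len_eq (hTw : IsTFam F q Tw) {j : Fin (n - 1)} {w : Perm (Fin n)}
    (hlen : len (w * s j) = len w + 1) : Tw (w * s j) = Tw w * T F q j := by
  induction hm : len w using Nat.strong_induction_on generalizing w with
  | _ m ih =>
    by_cases hw : w = 1
    · rw [hw, one_mul, hTw.1, one_mul, hTw.2.1]
    obtain ⟨i, hi⟩ := exists_len_eq_len_s_mul_add_one hw
    obtain ⟨v, rfl⟩ : ∃ v, w = s i * v := ⟨s i * w, (s_mul_s_mul i w).symm⟩
    rw [s_mul_s_mul] at hi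
    rw [mul_assoc] at hlen ⊢
    have hsv := len_s_mul i (v * s j)
    have hvs := len_mul_s j v
    rw [hTw.2.2 i (v * s j) (by omega), ih (len v) (by omega) (by omega) rfl, hTw.2.2 i v hi,
      mul_assoc]

lemma exists_T_mul_eq (hTw : IsTFam F q Tw) (j : Fin (n - 1)) (w : Perm (Fin n)) :
    ∃ r : F, T F q j * Tw w = Tw (s j * w) + r • Tw w := by
  rcases len_s_mul j w with hlen | hlen
  · exact ⟨0, by rw [hTw.2.2 j w hlen, zero_smul, add_zero]⟩
  · have hmul := hTw.2.2 j (s j * w) (by rwa [s_mul_s_mul])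
    rw [s_mul_s_mul] at hmul
    exact ⟨q - q⁻¹, by
      rw [hmul, ← mul_assoc, T_mul_T, add_mul, one_mul, smul_mul_assoc, add_comm]⟩

lemma exists_mul_T_eq (hTw : IsTFam F q Tw) (j : Fin (n - 1)) (w : Perm (Fin n)) :
    ∃ r : F, Tw w * T F q j = Tw (w * s j) + r • Tw w := by
  rcases len_mul_s j w with hlen | hlen
  · exact ⟨0, by rw [hTw.mul_s_of_len_eq hlen, zero_smul, add_zero]⟩
  · have hmul := hTw.mul_s_of_len_eq (j := j) (w := w * s j) (by rwa [mul_s_mul_s])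
    rw [mul_s_mul_s] at hmul
    exact ⟨q - q⁻¹, by
      rw [hmul, mul_assoc, T_mul_T, mul_add, mul_one, mul_smul_comm, add_comm]⟩

end IsTFam

/-- The evaluation of the symbols `T_w` in `H_n`. -/
noncomputable def pbwMap (Tw : Perm (Fin n) → H F q n) : PM F n →ₗ[F] H F q n :=
  Finsupp.lsum F fun w => LinearMap.mulRight F (Tw w) ∘ₗ (ofLC n q).toLinearMap

lemma pbwMap_single (w : Perm (Fin n)) (a : LC F n) :
    pbwMap Tw (.single w a) = ofLC n q a * Tw w :=
  Finsupp.lsum_single ..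

lemma pbwMap_single_one (w : Perm (Fin n)) : pbwMap Tw (.single w 1) = Tw w := by
  rw [pbwMap_single, map_one, one_mul]

lemma pbwMap_smul (a : LC F n) (m : PM F n) : pbwMap Tw (a • m) = ofLC n q a * pbwMap Tw m := by
  induction m using Finsupp.induction_linear with
  | zero => rw [smul_zero, map_zero, mul_zero]
  | add m m' hm hm' => rw [smul_add, map_add, map_add, hm, hm', mul_add]
  | single w b => rw [Finsupp.smul_single, pbwMap_single, pbwMap_single, smul_eq_mul, map_mul,
      mul_assoc]

lemma pbwMap_x_smul (k : Fin n) (m : PM F n) :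
    pbwMap Tw ((x k : LC F n) • m) = X F q k * pbwMap Tw m := by rw [pbwMap_smul, ofLC_x]

lemma pbwMap_c_smul (k : Fin n) (m : PM F n) :
    pbwMap Tw ((c k : LC F n) • m) = C F q k * pbwMap Tw m := by rw [pbwMap_smul, ofLC_c]

lemma pbwMap_tau (hTw : IsTFam F q Tw) (i : Fin (n - 1)) (m : PM F n) :
    pbwMap Tw (tau (q - q⁻¹) i m) = T F q i * pbwMap Tw m := by
  let K : Submodule F (PM F n) :=
    LinearMap.eqLocus (pbwMap Tw ∘ₗ tau (q - q⁻¹) i) (LinearMap.mulLeft F (T F q i) ∘ₗ pbwMap Tw)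
  have mem_K {m : PM F n} :
      m ∈ K ↔ pbwMap Tw (tau (q - q⁻¹) i m) = T F q i * pbwMap Tw m := Iff.rfl
  have hτ : ∀ m ∈ K, tau (q - q⁻¹) i m ∈ K := fun m hm => by
    rw [mem_K] at hm ⊢
    rw [tau_tau, map_add, map_smul, hm, ← mul_assoc, T_mul_T, add_mul, smul_mul_assoc, one_mul]
  have hc : ∀ m ∈ K, (c (lo i) : LC F n) • m ∈ K := fun m hm => by
    rw [mem_K] at hm ⊢
    rw [tau_c_lo_smul, pbwMap_c_smul, pbwMap_c_smul, hm, ← mul_assoc, ← mul_assoc, T_mul_C_lo]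
  have hx : ∀ m ∈ K, (x (lo i) : LC F n) • m ∈ K := fun m hm => by
    rw [mem_K] at hm ⊢
    rw [tau_x_lo_smul, map_sub, pbwMap_x_smul, pbwMap_x_smul, map_smul, pbwMap_smul, hm,
      ← mul_assoc, ← mul_assoc, map_add, map_mul, map_mul, ofLC_x, ofLC_x, ofLC_c, ofLC_c,
      ← T_mul_X_lo, add_mul, smul_mul_assoc, add_sub_cancel_right]
  have hfar (k : Fin n) (hlo : k ≠ lo i) (hhi : k ≠ hi i) (m : PM F n) (hm : m ∈ K) :
      (x k : LC F n) • m ∈ K ∧ (c k : LC F n) • m ∈ K := by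
    rw [mem_K] at hm
    constructor <;> rw [mem_K]
    · rw [tau_smul_of_mem_inert _ (x_mem_inert hlo hhi), pbwMap_x_smul, pbwMap_x_smul, hm,
        ← mul_assoc, ← mul_assoc, T_mul_X_of_ne q hlo hhi]
    · rw [tau_smul_of_mem_inert _ (c_mem_inert hlo hhi), pbwMap_c_smul, pbwMap_c_smul, hm,
        ← mul_assoc, ← mul_assoc, T_mul_C_of_ne q hlo hhi]
  have hmin (w : Perm (Fin n)) (hlt : w⁻¹ (lo i) < w⁻¹ (hi i)) : .single w 1 ∈ K := by
    rw [mem_K, tau_single_one_of_lt _ hlt, pbwMap_single_one, pbwMap_single_one,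
      hTw.2.2 i w (len_s_mul_of_lt hlt)]
  have hK : K = ⊤ := eq_top_of_stable_lo hτ (fun m _ => tau_tau _ i m) hc hx hfar hmin
  exact mem_K.1 (hK ▸ Submodule.mem_top)

lemma pbwMap_rho (hTw : IsTFam F q Tw) (h : H F q n) (m : PM F n) :
    pbwMap Tw (rho F q n h m) = h * pbwMap Tw m := by
  induction h using H.induction generalizing m with
  | algebraMap r => rw [AlgHom.commutes, Module.algebraMap_end_apply, map_smul, Algebra.smul_def]
  | X i => rw [rho_X, lcMul_apply, pbwMap_x_smul]
  | Xinv i => rw [rho_Xinv, lcMul_apply, pbwMap_smul, ofLC_y]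
  | C i => rw [rho_C, lcMul_apply, pbwMap_c_smul]
  | T i => rw [rho_T, pbwMap_tau hTw]
  | mul a b ha hb => rw [map_mul, Module.End.mul_apply, ha, hb, mul_assoc]
  | add a b ha hb => rw [map_add, LinearMap.add_apply, map_add, ha, hb, add_mul]

lemma orbit_rho (q : F) (n : ℕ) : orbit (rho F q n) (.single 1 1) = ⊤ := by
  refine eq_top_of_stable (ξ := q - q⁻¹) (S := Set.univ) (fun k m hm => ?_) (fun k m hm => ?_)
    (fun i _ m hm => ?_) fun w hw => ?_
  · rw [← lcMul_apply, ← rho_X q]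
    exact apply_mem_orbit _ hm
  · rw [← lcMul_apply, ← rho_C q]
    exact apply_mem_orbit _ hm
  · rw [← rho_T]
    exact apply_mem_orbit _ hm
  · have hw_one : w = 1 := by
      by_contra hne
      obtain ⟨i, hi⟩ := exists_apply_hi_lt_apply_lo (inv_ne_one.2 hne)
      exact hi.not_gt (hw i trivial)
    rw [hw_one]
    exact self_mem_orbit _ _

/-- The PBW isomorphism: `H_n` is a free left module over the Laurent–Clifford algebra on the
`T_w`. -/
noncomputable def pbwEquiv (hTw : IsTFam F q Tw) : PM F n ≃ₗ[F] H F q n :=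
  .ofBijective (pbwMap Tw) (bijective_of_orbit_eq_top (rho F q n) (pbwMap_rho hTw)
    (by rw [pbwMap_single_one, hTw.1]) (orbit_rho q n))

lemma pbwEquiv_apply (hTw : IsTFam F q Tw) (m : PM F n) : pbwEquiv hTw m = pbwMap Tw m := rfl

/-- The basis of `H_n` formed by the elements `X^α C^β T_w`. -/
noncomputable def pbwBasis (hTw : IsTFam F q Tw) :
    Module.Basis (Σ _ : Perm (Fin n), (Fin n → ℤ) × (Fin n → Bool)) F (H F q n) :=
  (Finsupp.basis fun _ => LC.basis).map (pbwEquiv hTw)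

lemma pbwBasis_apply (hTw : IsTFam F q Tw) (w : Perm (Fin n))
    (p : (Fin n → ℤ) × (Fin n → Bool)) :
    pbwBasis hTw ⟨w, p⟩ = Xmon F q p.1 * Cmon F q p.2 * Tw w := by
  rw [pbwBasis, Module.Basis.map_apply, Finsupp.coe_basis, pbwEquiv_apply, pbwMap_single,
    LC.basis_apply, map_mul, ofLC_xmon, ofLC_cmon]

end StandardBasis

section DoubleCosets

open Equiv LC DoubleCoset

variable {F} {n : ℕ} {q : F} {Tw : Perm (Fin n) → H F q n} {μ ν : List ℕ} {x : Perm (Fin n)}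

section SpanTw

variable {S : Set (Perm (Fin n))}

/-- The free left submodule of `H_n` over the Laurent–Clifford algebra on the `T_w` with
`w ∈ S`. -/
noncomputable def spanTw (hTw : IsTFam F q Tw) (S : Set (Perm (Fin n))) :
    Submodule F (H F q n) :=
  Submodule.span F (pbwBasis hTw '' (Sigma.fst ⁻¹' S))

lemma spanTw_univ (hTw : IsTFam F q Tw) : spanTw hTw Set.univ = ⊤ := by
  rw [spanTw, Set.preimage_univ, Set.image_univ, Module.Basis.span_eq]

lemma spanTw_iUnion {ι : Sort*} (hTw : IsTFam F q Tw) (S : ι → Set (Perm (Fin n))) :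
    spanTw hTw (⋃ i, S i) = ⨆ i, spanTw hTw (S i) := by
  simp only [spanTw, Set.preimage_iUnion, Set.image_iUnion, Submodule.span_iUnion]

lemma disjoint_spanTw (hTw : IsTFam F q Tw) {S S' : Set (Perm (Fin n))} (hS : Disjoint S S') :
    Disjoint (spanTw hTw S) (spanTw hTw S') :=
  (pbwBasis hTw).linearIndependent.disjoint_span_image (hS.preimage Sigma.fst)

lemma ofLC_mul_Tw_mem_spanTw (hTw : IsTFam F q Tw) {w : Perm (Fin n)} (hw : w ∈ S)
    (a : LC F n) : ofLC n q a * Tw w ∈ spanTw hTw S := by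
  have ha : a ∈ Submodule.span F (Set.range LC.basis) := by
    rw [LC.basis.span_eq]
    exact Submodule.mem_top
  induction ha using Submodule.span_induction with
  | mem _ hp =>
    obtain ⟨p, rfl⟩ := hp
    refine Submodule.subset_span ⟨⟨w, p⟩, hw, ?_⟩
    rw [pbwBasis_apply, LC.basis_apply, map_mul, ofLC_xmon, ofLC_cmon]
  | zero => rw [map_zero, zero_mul]; exact zero_mem _
  | add a b _ _ ha hb => rw [map_add, add_mul]; exact add_mem ha hb
  | smul r a _ ha => rw [map_smul, smul_mul_assoc]; exact Submodule.smul_mem _ r ha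

lemma Tw_mem_spanTw (hTw : IsTFam F q Tw) {w : Perm (Fin n)} (hw : w ∈ S) :
    Tw w ∈ spanTw hTw S := by
  simpa only [map_one, one_mul] using ofLC_mul_Tw_mem_spanTw hTw hw 1

lemma spanTw_le {hTw : IsTFam F q Tw} {K : Submodule F (H F q n)}
    (hK : ∀ w ∈ S, ∀ a, ofLC n q a * Tw w ∈ K) : spanTw hTw S ≤ K := by
  refine Submodule.span_le.2 ?_
  rintro _ ⟨⟨w, p⟩, hw, rfl⟩
  rw [pbwBasis_apply, ← ofLC_xmon, ← ofLC_cmon, ← map_mul]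
  exact hK w hw _

lemma ofLC_mul_mem_spanTw {hTw : IsTFam F q Tw} (a : LC F n) {h : H F q n}
    (hh : h ∈ spanTw hTw S) : ofLC n q a * h ∈ spanTw hTw S := by
  refine spanTw_le (K := (spanTw hTw S).comap (LinearMap.mulLeft F (ofLC n q a)))
    (fun w hw b => ?_) hh
  rw [Submodule.mem_comap, LinearMap.mulLeft_apply, ← mul_assoc, ← map_mul]
  exact ofLC_mul_Tw_mem_spanTw hTw hw _

lemma T_mul_mem_spanTw {hTw : IsTFam F q Tw} {j : Fin (n - 1)} (hS : ∀ w ∈ S, s j * w ∈ S)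
    {h : H F q n} (hh : h ∈ spanTw hTw S) : T F q j * h ∈ spanTw hTw S := by
  refine spanTw_le (K := (spanTw hTw S).comap (LinearMap.mulLeft F (T F q j)))
    (fun w hw a => ?_) hh
  rw [Submodule.mem_comap, LinearMap.mulLeft_apply, ← pbwMap_single, ← pbwMap_tau hTw, tau_single,
    map_add, map_add, map_smul, map_smul]
  simp only [pbwMap_single]
  exact add_mem (add_mem (ofLC_mul_Tw_mem_spanTw hTw (hS w hw) _)
    (Submodule.smul_mem _ _ (ofLC_mul_Tw_mem_spanTw hTw hw _)))
    (Submodule.smul_mem _ _ (ofLC_mul_Tw_mem_spanTw hTw hw _))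

lemma mul_T_mem_spanTw {hTw : IsTFam F q Tw} {j : Fin (n - 1)} (hS : ∀ w ∈ S, w * s j ∈ S)
    {h : H F q n} (hh : h ∈ spanTw hTw S) : h * T F q j ∈ spanTw hTw S := by
  refine spanTw_le (K := (spanTw hTw S).comap (LinearMap.mulRight F (T F q j)))
    (fun w hw a => ?_) hh
  obtain ⟨r, hr⟩ := hTw.exists_mul_T_eq j w
  rw [Submodule.mem_comap, LinearMap.mulRight_apply, mul_assoc, hr, mul_add, mul_smul_comm]
  exact add_mem (ofLC_mul_Tw_mem_spanTw hTw (hS w hw) a)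
    (Submodule.smul_mem _ r (ofLC_mul_Tw_mem_spanTw hTw hw a))

lemma mul_mem_spanTw_of_mem_parabolicC {hTw : IsTFam F q Tw}
    (hS : ∀ j, InYoung μ (s j) → ∀ w ∈ S, s j * w ∈ S) {a h : H F q n}
    (ha : a ∈ parabolicC F q (n := n) μ) (hh : h ∈ spanTw hTw S) : a * h ∈ spanTw hTw S := by
  induction ha using Algebra.adjoin_induction generalizing h with
  | mem _ hgen =>
    obtain ((⟨i, rfl⟩ | ⟨i, rfl⟩) | ⟨i, rfl⟩) | ⟨j, hj, rfl⟩ := hgen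
    · simpa only [ofLC_x] using ofLC_mul_mem_spanTw (LC.x i) hh
    · simpa only [ofLC_y] using ofLC_mul_mem_spanTw (LC.y i) hh
    · simpa only [ofLC_c] using ofLC_mul_mem_spanTw (LC.c i) hh
    · exact T_mul_mem_spanTw (hS j hj) hh
  | algebraMap r => rw [← Algebra.smul_def]; exact Submodule.smul_mem _ r hh
  | add a b _ _ ha hb => rw [add_mul]; exact add_mem (ha hh) (hb hh)
  | mul a b _ _ ha hb => rw [mul_assoc]; exact ha (hb hh)

lemma mul_mem_spanTw_of_mem_clparC {hTw : IsTFam F q Tw}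
    (hS : ∀ j, InYoung ν (s j) → ∀ w ∈ S, w * s j ∈ S) {b h : H F q n}
    (hb : b ∈ clparC F q (n := n) ν) (hh : h ∈ spanTw hTw S) : h * b ∈ spanTw hTw S := by
  induction hb using Algebra.adjoin_induction generalizing h with
  | mem _ hgen =>
    obtain ⟨j, hj, rfl⟩ := hgen
    exact mul_T_mem_spanTw (hS j hj) hh
  | algebraMap r =>
    rw [← Algebra.commutes, ← Algebra.smul_def]
    exact Submodule.smul_mem _ r hh
  | add a b _ _ ha hb => rw [mul_add]; exact add_mem (ha hh) (hb hh)
  | mul a b _ _ ha hb => rw [← mul_assoc]; exact hb (ha hh)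

end SpanTw

lemma T_mem_parabolicC {j : Fin (n - 1)} (hj : InYoung μ (s j)) :
    T F q j ∈ parabolicC F q (n := n) μ :=
  Algebra.subset_adjoin (.inr ⟨j, hj, rfl⟩)

lemma T_mem_clparC {j : Fin (n - 1)} (hj : InYoung ν (s j)) : T F q j ∈ clparC F q (n := n) ν :=
  Algebra.subset_adjoin ⟨j, hj, rfl⟩

lemma ofLC_mem_parabolicC (μ : List ℕ) (a : LC F n) : ofLC n q a ∈ parabolicC F q (n := n) μ := by
  induction a using LC.induction with
  | algebraMap r => rw [AlgHom.commutes]; exact Subalgebra.algebraMap_mem _ r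
  | x i => rw [ofLC_x]; exact Algebra.subset_adjoin (.inl (.inl (.inl ⟨i, rfl⟩)))
  | c i => rw [ofLC_c]; exact Algebra.subset_adjoin (.inl (.inr ⟨i, rfl⟩))
  | mul a b ha hb => rw [map_mul]; exact mul_mem ha hb
  | add a b ha hb => rw [map_add]; exact add_mem ha hb

lemma Tw_mem_HTxH (x : Perm (Fin n)) : Tw x ∈ HTxH F q μ ν Tw x :=
  Submodule.subset_span ⟨1, one_mem _, 1, one_mem _, by rw [one_mul, mul_one]⟩

lemma mul_mem_HTxH_of_mem_parabolicC {a h : H F q n} (ha : a ∈ parabolicC F q (n := n) μ)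
    (hh : h ∈ HTxH F q μ ν Tw x) : a * h ∈ HTxH F q μ ν Tw x := by
  suffices hle : HTxH F q μ ν Tw x ≤ (HTxH F q μ ν Tw x).comap (LinearMap.mulLeft F a) from hle hh
  refine Submodule.span_le.2 ?_
  rintro _ ⟨a', ha', b, hb, rfl⟩
  exact Submodule.subset_span ⟨a * a', mul_mem ha ha', b, hb, by simp [mul_assoc]⟩

lemma mul_mem_HTxH_of_mem_clparC {b h : H F q n} (hb : b ∈ clparC F q (n := n) ν)
    (hh : h ∈ HTxH F q μ ν Tw x) : h * b ∈ HTxH F q μ ν Tw x := by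
  suffices hle : HTxH F q μ ν Tw x ≤ (HTxH F q μ ν Tw x).comap (LinearMap.mulRight F b) from hle hh
  refine Submodule.span_le.2 ?_
  rintro _ ⟨a, ha, b', hb', rfl⟩
  exact Submodule.subset_span ⟨a, ha, b' * b, mul_mem hb' hb, by simp [mul_assoc]⟩

lemma Tw_mem_HTxH_of_mem_doubleCoset (hTw : IsTFam F q Tw) {w : Perm (Fin n)}
    (hw : w ∈ doubleCoset x (young n μ) (young n ν)) : Tw w ∈ HTxH F q μ ν Tw x := by
  refine doubleCoset_young_induction (P := fun w => Tw w ∈ HTxH F q μ ν Tw x) (Tw_mem_HTxH x)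
    (fun j w hj ih => ?_) (fun j w hj ih => ?_) hw
  · obtain ⟨r, hr⟩ := hTw.exists_T_mul_eq j w
    rw [eq_sub_of_add_eq hr.symm]
    exact sub_mem (mul_mem_HTxH_of_mem_parabolicC (T_mem_parabolicC hj) ih)
      (Submodule.smul_mem _ r ih)
  · obtain ⟨r, hr⟩ := hTw.exists_mul_T_eq j w
    rw [eq_sub_of_add_eq hr.symm]
    exact sub_mem (mul_mem_HTxH_of_mem_clparC (T_mem_clparC hj) ih) (Submodule.smul_mem _ r ih)

theorem HTxH_eq_spanTw (hTw : IsTFam F q Tw) (μ ν : List ℕ) (x : Perm (Fin n)) :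
    HTxH F q μ ν Tw x = spanTw hTw (doubleCoset x (young n μ) (young n ν)) := by
  refine le_antisymm (Submodule.span_le.2 ?_) (spanTw_le fun w hw a =>
    mul_mem_HTxH_of_mem_parabolicC (ofLC_mem_parabolicC μ a)
      (Tw_mem_HTxH_of_mem_doubleCoset hTw hw))
  rintro _ ⟨a, ha, b, hb, rfl⟩
  exact mul_mem_spanTw_of_mem_clparC (fun j hj _ => mul_s_mem_doubleCoset hj) hb
    (mul_mem_spanTw_of_mem_parabolicC (fun j hj _ => s_mul_mem_doubleCoset hj) ha
      (Tw_mem_spanTw hTw (mem_doubleCoset_self _ _ x)))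

/-- The index of `X^α C^β T_w` in `pbwBasis`. -/
def dcIndex (p : (Fin n → ℤ) × (Fin n → Bool) × {w : Perm (Fin n) // InDC μ ν x w}) :
    Σ _ : Perm (Fin n), (Fin n → ℤ) × (Fin n → Bool) :=
  ⟨p.2.2, p.1, p.2.1⟩

lemma dcFam_eq (hTw : IsTFam F q Tw) (μ ν : List ℕ) (x : Perm (Fin n)) :
    dcFam F q μ ν Tw x = pbwBasis hTw ∘ dcIndex :=
  funext fun p => (pbwBasis_apply hTw p.2.2.1 (p.1, p.2.1)).symm

lemma linearIndependent_dcFam (hTw : IsTFam F q Tw) (μ ν : List ℕ) (x : Perm (Fin n)) :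
    LinearIndependent F (dcFam F q μ ν Tw x) := by
  rw [dcFam_eq hTw]
  refine (pbwBasis hTw).linearIndependent.comp _ ?_
  rintro ⟨α, β, w, hw⟩ ⟨α', β', w', hw'⟩ heq
  simp_all [dcIndex]

lemma range_dcIndex : Set.range (dcIndex (μ := μ) (ν := ν) (x := x)) =
    Sigma.fst ⁻¹' doubleCoset x (young n μ) (young n ν) := by
  ext ⟨w, α, β⟩
  rw [Set.mem_preimage, ← inDC_iff_mem_doubleCoset]
  constructor
  · rintro ⟨⟨α', β', w', hw'⟩, heq⟩
    cases heq
    exact hw'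
  · exact fun hw => ⟨⟨α, β, w, hw⟩, rfl⟩

lemma span_range_dcFam (hTw : IsTFam F q Tw) (μ ν : List ℕ) (x : Perm (Fin n)) :
    Submodule.span F (Set.range (dcFam F q μ ν Tw x)) = HTxH F q μ ν Tw x := by
  rw [HTxH_eq_spanTw hTw, spanTw, dcFam_eq hTw, Set.range_comp, range_dcIndex]

lemma iSup_HTxH (hTw : IsTFam F q Tw) (μ ν : List ℕ) :
    (⨆ x ∈ {x : Perm (Fin n) | IsMinDC μ ν x}, HTxH F q μ ν Tw x) = ⊤ := by
  simp only [HTxH_eq_spanTw hTw, ← spanTw_iUnion]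
  rw [← spanTw_univ hTw]
  congr 1
  refine Set.eq_univ_of_forall fun w => ?_
  obtain ⟨x, hx, hw⟩ := exists_isMinDC_mem_doubleCoset μ ν w
  exact Set.mem_biUnion hx hw

lemma disjoint_HTxH (hTw : IsTFam F q Tw) (hx : IsMinDC μ ν x) :
    Disjoint (HTxH F q μ ν Tw x)
      (⨆ y ∈ {y : Perm (Fin n) | IsMinDC μ ν y ∧ y ≠ x}, HTxH F q μ ν Tw y) := by
  simp only [HTxH_eq_spanTw hTw, ← spanTw_iUnion]
  refine disjoint_spanTw hTw (Set.disjoint_iUnion₂_right.2 fun y hy => ?_)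
  exact hx.disjoint_doubleCoset hy.1 hy.2.symm

end DoubleCosets

theorem double_coset_decomposition_general
    (F : Type) [Field F] (q : F) (_hq : q ≠ 0) (n : ℕ)
    (μ ν : List ℕ) (_hμ : IsComposition μ n) (_hν : IsComposition ν n)
    (Tw : Equiv.Perm (Fin n) → H F q n) (hTw : IsTFam F q Tw) :
    (∀ x : Equiv.Perm (Fin n),
      LinearIndependent F (dcFam F q μ ν Tw x) ∧
        Submodule.span F (Set.range (dcFam F q μ ν Tw x)) = HTxH F q μ ν Tw x) ∧
    (⨆ x ∈ {x : Equiv.Perm (Fin n) | IsMinDC μ ν x}, HTxH F q μ ν Tw x) = ⊤ ∧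
    ∀ x : Equiv.Perm (Fin n), IsMinDC μ ν x →
      Disjoint (HTxH F q μ ν Tw x)
        (⨆ y ∈ {y : Equiv.Perm (Fin n) | IsMinDC μ ν y ∧ y ≠ x},
          HTxH F q μ ν Tw y) :=
  ⟨fun x => ⟨linearIndependent_dcFam hTw μ ν x, span_range_dcFam hTw μ ν x⟩,
    iSup_HTxH hTw μ ν, fun _ => disjoint_HTxH hTw⟩

/-- **Double coset decomposition** (Lemma `soup` of Brundan–Kleshchev): for
compositions `μ, ν` of `n` and every minimal length double coset representative
`x ∈ D_{μ,ν}`, the subspace `H_μ T_x H^cl_ν` has basis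
`{X^α C^β T_w : w ∈ S_μ x S_ν}`, and `H_n = ⊕_{x ∈ D_{μ,ν}} H_μ T_x H^cl_ν`. -/
theorem double_coset_decomposition
    (F : Type) [Field F] [IsAlgClosed F] (h2 : (2 : F) ≠ 0)
    (q : F) (hq : GoodParam F q) (n : ℕ)
    (μ ν : List ℕ) (hμ : IsComposition μ n) (hν : IsComposition ν n)
    (Tw : Equiv.Perm (Fin n) → H F q n) (hTw : IsTFam F q Tw) :
    (∀ x : Equiv.Perm (Fin n), IsMinDC μ ν x →
      LinearIndependent F (dcFam F q μ ν Tw x) ∧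
        Submodule.span F (Set.range (dcFam F q μ ν Tw x)) = HTxH F q μ ν Tw x) ∧
    (⨆ x ∈ {x : Equiv.Perm (Fin n) | IsMinDC μ ν x}, HTxH F q μ ν Tw x) = ⊤ ∧
    ∀ x : Equiv.Perm (Fin n), IsMinDC μ ν x →
      Disjoint (HTxH F q μ ν Tw x)
        (⨆ y ∈ {y : Equiv.Perm (Fin n) | IsMinDC μ ν y ∧ y ≠ x},
          HTxH F q μ ν Tw y) := by
  obtain ⟨hbasis, hsum⟩ := double_coset_decomposition_general F q hq.1 n μ ν hμ hν Tw hTw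
  exact ⟨fun x _ => hbasis x, hsum⟩

end HC
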